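/- There is a unique ℂ-algebra isomorphism HC from ℬ_t onto the spherical double affine Hecke algebra eH_{t,q}e determined by HC(c₁) = e(Y₁+Y₂)e, HC(c₂) = q²·e(Y₁Y₂)e, HC(d₁) = e(X₁+X₂)e, HC(d₂) = q²·e(X₁X₂)e, and HC(r) = e(t⁻²Y₁X₁ + Y₂X₂)e. -/

import Mathlib

noncomputable section

/-- Generators of the double affine Hecke algebra of type GL₂:
`T, T⁻¹, X₁, X₁⁻¹, X₂, X₂⁻¹, Y₁, Y₁⁻¹, Y₂, Y₂⁻¹`. -/
inductive DGen : Type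
  | T | Ti | X1 | X1i | X2 | X2i | Y1 | Y1i | Y2 | Y2i

abbrev FD : Type := FreeAlgebra ℂ DGen

def gD : DGen → FD := FreeAlgebra.ι ℂ

/-- The defining relations of the double affine Hecke algebra `H_{t,q}` of type GL₂. -/
inductive DRel (q t : ℂ) : FD → FD → Prop
  | TTi : DRel q t (gD .T * gD .Ti) 1
  | TiT : DRel q t (gD .Ti * gD .T) 1
  | X1X1i : DRel q t (gD .X1 * gD .X1i) 1
  | X1iX1 : DRel q t (gD .X1i * gD .X1) 1
  | X2X2i : DRel q t (gD .X2 * gD .X2i) 1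
  | X2iX2 : DRel q t (gD .X2i * gD .X2) 1
  | Y1Y1i : DRel q t (gD .Y1 * gD .Y1i) 1
  | Y1iY1 : DRel q t (gD .Y1i * gD .Y1) 1
  | Y2Y2i : DRel q t (gD .Y2 * gD .Y2i) 1
  | Y2iY2 : DRel q t (gD .Y2i * gD .Y2) 1
  | TX1T : DRel q t (gD .T * gD .X1 * gD .T) (gD .X2)
  | TiY1Ti : DRel q t (gD .Ti * gD .Y1 * gD .Ti) (gD .Y2)
  | Xcomm : DRel q t (gD .X1 * gD .X2) (gD .X2 * gD .X1)
  | Ycomm : DRel q t (gD .Y1 * gD .Y2) (gD .Y2 * gD .Y1)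
  | YXX : DRel q t (gD .Y1 * (gD .X1 * gD .X2)) ((q ^ 2) • (gD .X1 * gD .X2 * gD .Y1))
  | X1iY2 : DRel q t (gD .X1i * gD .Y2) (gD .Y2 * gD .X1i * gD .Ti * gD .Ti)
  | hecke : DRel q t ((gD .T + algebraMap ℂ FD t⁻¹) * (gD .T - algebraMap ℂ FD t)) 0

/-- The double affine Hecke algebra `H_{t,q}` of type GL₂. -/
abbrev DAHA (q t : ℂ) : Type := RingQuot (DRel q t)

variable (q t : ℂ)

def T : DAHA q t := RingQuot.mkAlgHom ℂ (DRel q t) (gD .T)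
def Ti : DAHA q t := RingQuot.mkAlgHom ℂ (DRel q t) (gD .Ti)
def X1 : DAHA q t := RingQuot.mkAlgHom ℂ (DRel q t) (gD .X1)
def X1i : DAHA q t := RingQuot.mkAlgHom ℂ (DRel q t) (gD .X1i)
def X2 : DAHA q t := RingQuot.mkAlgHom ℂ (DRel q t) (gD .X2)
def X2i : DAHA q t := RingQuot.mkAlgHom ℂ (DRel q t) (gD .X2i)
def Y1 : DAHA q t := RingQuot.mkAlgHom ℂ (DRel q t) (gD .Y1)
def Y1i : DAHA q t := RingQuot.mkAlgHom ℂ (DRel q t) (gD .Y1i)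
def Y2 : DAHA q t := RingQuot.mkAlgHom ℂ (DRel q t) (gD .Y2)
def Y2i : DAHA q t := RingQuot.mkAlgHom ℂ (DRel q t) (gD .Y2i)

/-- Generators of the algebra `ℬ_t`: `c₁, c₂, c₂⁻¹, d₁, d₂, d₂⁻¹, r`. -/
inductive BGen : Type
  | c1 | c2 | c2i | d1 | d2 | d2i | r

abbrev FB : Type := FreeAlgebra ℂ BGen

def gB : BGen → FB := FreeAlgebra.ι ℂ

/-- The defining relations of the algebra `ℬ_t` (the paper's presentation of the
quantum Hamiltonian reduction of `𝒟_q(GL₂)` along the ideal `𝓘_t`). -/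
inductive BRel (q t : ℂ) : FB → FB → Prop
  | c2c2i : BRel q t (gB .c2 * gB .c2i) 1
  | c2ic2 : BRel q t (gB .c2i * gB .c2) 1
  | d2d2i : BRel q t (gB .d2 * gB .d2i) 1
  | d2id2 : BRel q t (gB .d2i * gB .d2) 1
  | c2c1 : BRel q t (gB .c2 * gB .c1) (gB .c1 * gB .c2)
  | d2d1 : BRel q t (gB .d2 * gB .d1) (gB .d1 * gB .d2)
  | d2c2 : BRel q t (gB .d2 * gB .c2) ((q⁻¹ ^ 4) • (gB .c2 * gB .d2))
  | d2c1 : BRel q t (gB .d2 * gB .c1) ((q⁻¹ ^ 2) • (gB .c1 * gB .d2))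
  | d1c2 : BRel q t (gB .d1 * gB .c2) ((q⁻¹ ^ 2) • (gB .c2 * gB .d1))
  | d1c1 : BRel q t (gB .d1 * gB .c1) (gB .c1 * gB .d1 + (q⁻¹ ^ 2 - 1) • gB .r)
  | d2r : BRel q t (gB .d2 * gB .r) ((q⁻¹ ^ 2) • (gB .r * gB .d2))
  | rc2 : BRel q t (gB .r * gB .c2) ((q⁻¹ ^ 2) • (gB .c2 * gB .r))
  | d1r : BRel q t (gB .d1 * gB .r)
      ((q⁻¹ ^ 2) • (gB .r * gB .d1) + ((1 - q⁻¹ ^ 2) * q⁻¹ ^ 2) • (gB .c1 * gB .d2))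
  | rc1 : BRel q t (gB .r * gB .c1)
      ((q⁻¹ ^ 2) • (gB .c1 * gB .r) + ((1 - q⁻¹ ^ 2) * q⁻¹ ^ 2) • (gB .c2 * gB .d1))
  | rr : BRel q t (gB .r * gB .r)
      ((q⁻¹ ^ 4 * (1 + t ^ 2) * (q⁻¹ ^ 2 + t⁻¹ ^ 2)) • (gB .c2 * gB .d2)
        - (q⁻¹ ^ 4) • (gB .c2 * gB .d1 * gB .d1)
        - (q⁻¹ ^ 4) • (gB .c1 * gB .c1 * gB .d2)
        + (q⁻¹ ^ 2) • (gB .c1 * gB .r * gB .d1))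

/-- The algebra `ℬ_t`. -/
abbrev AlgBt (q t : ℂ) : Type := RingQuot (BRel q t)

def c1 (q t : ℂ) : AlgBt q t := RingQuot.mkAlgHom ℂ (BRel q t) (gB .c1)
def c2 (q t : ℂ) : AlgBt q t := RingQuot.mkAlgHom ℂ (BRel q t) (gB .c2)
def d1 (q t : ℂ) : AlgBt q t := RingQuot.mkAlgHom ℂ (BRel q t) (gB .d1)
def d2 (q t : ℂ) : AlgBt q t := RingQuot.mkAlgHom ℂ (BRel q t) (gB .d2)
def rr (q t : ℂ) : AlgBt q t := RingQuot.mkAlgHom ℂ (BRel q t) (gB .r)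

/-- The symmetrizing idempotent `e = (1 + tT)/(1 + t²)` of the DAHA. -/
def eSym (q t : ℂ) : DAHA q t := ((1 + t ^ 2)⁻¹ : ℂ) • (1 + t • T q t)

/-!
The defining relations of `ℬ_t` are satisfied modulo `e` on the right by elements of the DAHA which
preserve its submodule `eH`, and this gives the homomorphism.

It is onto `eHe` because `H = 𝓨 𝓧 𝓗`, where `𝓧` and `𝓨` are the Laurent polynomials in the `Xᵢ` and
in the `Yᵢ` and `𝓗 = ℂ + ℂT`. Indeed `𝓨` and `𝓧` are generated over their symmetric parts by `1, Y₁`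
and `1, X₁`, the symmetric parts commute with `e`, and `T` acts on `e` by a scalar, so only the four
elements `e{1, Y₁}{1, X₁}e` remain to be reached.

It is injective because `ℬ_t` is spanned by the monomials `c₁ᵃ c₂ᵐ rᵉ d₁ᵏ d₂ⁿ` with `e ≤ 1`, whose
images are linearly independent. To see this let the DAHA act by Demazure-Lusztig operators and
`q`-shifts on expressions `∑ fᵢⱼ x₁ⁱ x₂ʲ` with coefficients in a field containing `y₁` and `y₂`, and
apply the monomials to `1`. The leading term in the `xᵢ` determines `k + e` and `n`, and its
coefficient is that of `d₁ᵏ⁺ᵉ d₂ⁿ` times `y₁ᵉ` and a symmetric function of `y₁`, `y₂`, where `1, y₁`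
are linearly independent over the symmetric functions.
-/

variable {q t}

local notation "κ" => (t - t⁻¹ : ℂ)
local notation "𝐞" => eSym q t

/-! ### Preliminaries on algebras -/

section QCommute

variable {k A : Type*} [Field k] [Ring A] [Algebra k A] {s s' : k} {a b c : A}

/-- `a` and `b` commute up to the scalar `s`, that is `a * b = s • (b * a)`. -/
def QCommute (s : k) (a b : A) : Prop := a * b = s • (b * a)

namespace QCommute

theorem of_commute (h : Commute a b) : QCommute (1 : k) a b := by
  rw [QCommute, one_smul, h.eq]

theorem symm (hs : s ≠ 0) (h : QCommute s a b) : QCommute s⁻¹ b a :=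
  (inv_smul_eq_iff₀ hs).2 h |>.symm

theorem smul_left (h : QCommute s a b) (r : k) : QCommute s (r • a) b := by
  rw [QCommute, smul_mul_assoc, mul_smul_comm, h, smul_comm]

theorem smul_right (h : QCommute s a b) (r : k) : QCommute s a (r • b) := by
  rw [QCommute, mul_smul_comm, smul_mul_assoc, h, smul_comm]

theorem add_left (ha : QCommute s a c) (hb : QCommute s b c) : QCommute s (a + b) c := by
  rw [QCommute, add_mul, mul_add, ha, hb, smul_add]

theorem add_right (hb : QCommute s a b) (hc : QCommute s a c) : QCommute s a (b + c) := by
  rw [QCommute, mul_add, add_mul, hb, hc, smul_add]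

theorem mul_left (ha : QCommute s a c) (hb : QCommute s' b c) : QCommute (s * s') (a * b) c := by
  rw [QCommute, mul_assoc, hb, mul_smul_comm, ← mul_assoc, ha, smul_mul_assoc, smul_smul,
    mul_comm s', mul_assoc]

theorem mul_right (hb : QCommute s a b) (hc : QCommute s' a c) : QCommute (s * s') a (b * c) := by
  rw [QCommute, ← mul_assoc, hb, smul_mul_assoc, mul_assoc, hc, mul_smul_comm, smul_smul,
    ← mul_assoc]

theorem units_inv_right {u : Aˣ} (hs : s ≠ 0) (h : QCommute s a u) : QCommute s⁻¹ a ↑u⁻¹ := by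
  rw [QCommute, Units.mul_inv_eq_iff_eq_mul, smul_mul_assoc, mul_assoc, h, mul_smul_comm,
    Units.inv_mul_cancel_left, inv_smul_smul₀ hs]

theorem units_inv_left {u : Aˣ} (hs : s ≠ 0) (h : QCommute s ↑u b) : QCommute s⁻¹ ↑u⁻¹ b :=
  inv_inv s ▸ ((h.symm hs).units_inv_right (inv_ne_zero hs)).symm (inv_ne_zero (inv_ne_zero hs))

end QCommute

end QCommute

theorem mul_mul_of_mul_eq {M : Type*} [Semigroup M] {a b c : M} (h : a * b = c) (z : M) :
    a * (b * z) = c * z := by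
  rw [← mul_assoc, h]

theorem one_add_sq_ne_zero {R : Type*} [Ring R] {a : R} (h : a ^ 2 ≠ -1) : 1 + a ^ 2 ≠ 0 :=
  fun h0 ↦ h (eq_neg_of_add_eq_zero_right h0)

theorem smul_div_smul_cancel {k K : Type*} [Field k] [Field K] [Algebra k K] {c : k} (hc : c ≠ 0)
    (x y : K) : (c • x) / (c • y) = x / y := by
  rw [Algebra.smul_def, Algebra.smul_def, mul_div_mul_left]
  exact (map_ne_zero _).2 hc

section Corner

variable {k A : Type*} [CommRing k] [Ring A] [Algebra k A] {e : A}

instance cornerModule (he : IsIdempotentElem e) : Module k he.Corner where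
  smul s x := ⟨s • x.1, by
    obtain ⟨_, a, rfl⟩ := x
    exact ⟨s • a, by simp only [mul_smul_comm, smul_mul_assoc]⟩⟩
  one_smul x := Subtype.ext (one_smul k x.1)
  mul_smul r s x := Subtype.ext (mul_smul r s x.1)
  smul_zero s := Subtype.ext (smul_zero s)
  smul_add s x y := Subtype.ext (smul_add s x.1 y.1)
  add_smul r s x := Subtype.ext (add_smul r s x.1)
  zero_smul x := Subtype.ext (zero_smul k x.1)

instance cornerAlgebra (he : IsIdempotentElem e) : Algebra k he.Corner :=
  Algebra.ofModule (fun s x y ↦ Subtype.ext (smul_mul_assoc s x.1 y.1))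
    fun s x y ↦ Subtype.ext (mul_smul_comm s x.1 y.1)

variable (k) in
/-- The inclusion of the corner `eAe` in `A`. It is multiplicative, but sends `1` to `e`. -/
def cornerSubtype (he : IsIdempotentElem e) : he.Corner →ₗ[k] A where
  toFun x := x.1
  map_add' _ _ := rfl
  map_smul' _ _ := rfl

variable (k) in
/-- The subalgebra of those `a` for which `a * e` lies in `eAe`, i.e. `a * eA ⊆ eA`. -/
def cornerStabilizer (he : IsIdempotentElem e) : Subalgebra k A where
  carrier := {a | e * a * e = a * e}
  mul_mem' {a b} ha hb := by
    calc e * (a * b) * e = e * a * (e * b * e) := by rw [hb]; simp only [mul_assoc]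
      _ = e * a * e * (b * e) := by simp only [mul_assoc]
      _ = a * (e * b * e) := by rw [ha]; simp only [mul_assoc]
      _ = a * b * e := by rw [hb, mul_assoc]
  add_mem' {a b} ha hb := by
    change e * (a + b) * e = (a + b) * e
    rw [mul_add, add_mul, add_mul, ha, hb]
  algebraMap_mem' s := by
    change e * algebraMap k A s * e = algebraMap k A s * e
    rw [← Algebra.commutes, mul_assoc, he.eq]

/-- The homomorphism `a ↦ a * e` onto the corner `eAe`, the endomorphism ring of `eA`. -/
def toCorner (he : IsIdempotentElem e) : cornerStabilizer k he →ₐ[k] he.Corner :=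
  AlgHom.ofLinearMap
    { toFun a := ⟨a * e, a, a.2⟩
      map_add' a b := Subtype.ext (add_mul a.1 b.1 e)
      map_smul' s a := Subtype.ext (smul_mul_assoc s a.1 e) }
    (Subtype.ext (one_mul e)) fun a b ↦ Subtype.ext <| by
      have hb : e * b * e = b * e := b.2
      change a * b * e = a * e * (b * e)
      rw [mul_assoc, mul_assoc, ← mul_assoc e, hb]

/-- A multiplicative linear map sending `1` to an idempotent `e` takes values in `eAe`. -/
def cornerRestrict {B : Type*} [Ring B] [Algebra k B] (he : IsIdempotentElem e) (f : B →ₗ[k] A)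
    (h_mul : ∀ x y, f (x * y) = f x * f y) (h_one : f 1 = e) : B →ₐ[k] he.Corner :=
  AlgHom.ofLinearMap
    { toFun x := ⟨f x, f x, by
        change e * f x * e = f x
        rw [← h_one, ← h_mul, ← h_mul, one_mul, mul_one]⟩
      map_add' x y := Subtype.ext (map_add f x y)
      map_smul' s x := Subtype.ext (map_smul f s x) }
    (Subtype.ext h_one) fun x y ↦ Subtype.ext (h_mul x y)

end Corner

section Adjoin

open Algebra Submodule

variable {k A : Type*} [CommRing k] [Ring A] [Algebra k A] {s : Set A}

theorem span_pair_mul_span_pair_le {a b c d : A} {N : Submodule k A} (hac : a * c ∈ N)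
    (had : a * d ∈ N) (hbc : b * c ∈ N) (hbd : b * d ∈ N) : span k {a, b} * span k {c, d} ≤ N := by
  rw [span_mul_span, span_le]
  rintro _ ⟨_, rfl | rfl, _, rfl | rfl, rfl⟩ <;> assumption

theorem adjoin_mul_le {N : Submodule k A} (h : ∀ a ∈ s, ∀ x ∈ N, a * x ∈ N) :
    (adjoin k s).toSubmodule * N ≤ N := by
  refine mul_le.2 fun a ha ↦ ?_
  induction ha using adjoin_induction with
  | mem a ha => exact h a ha
  | algebraMap r => exact fun x hx ↦ Algebra.smul_def r x ▸ N.smul_mem r hx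
  | add a b _ _ iha ihb => exact fun x hx ↦ add_mul a b x ▸ N.add_mem (iha x hx) (ihb x hx)
  | mul a b _ _ iha ihb => exact fun x hx ↦ mul_assoc a b x ▸ iha _ (ihb x hx)

theorem adjoin_le_of_mul_mem {N : Submodule k A} (h_one : 1 ∈ N)
    (h : ∀ a ∈ s, ∀ x ∈ N, a * x ∈ N) : (adjoin k s).toSubmodule ≤ N := fun a ha ↦
  mul_one a ▸ adjoin_mul_le h (mul_mem_mul ha h_one)

theorem span_mul_adjoin_le {S : Set A}
    (h : ∀ v ∈ S, ∀ a ∈ s, v * a ∈ (adjoin k s).toSubmodule * span k S) :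
    span k S * (adjoin k s).toSubmodule ≤ (adjoin k s).toSubmodule * span k S := by
  set N := (adjoin k s).toSubmodule * span k S with hN
  have mul_mem {a : A} (ha : span k S ≤ N.comap (LinearMap.mulRight k a)) :
      N ≤ N.comap (LinearMap.mulRight k a) := by
    refine mul_le.2 fun b hb v hv ↦ ?_
    rw [mem_comap, LinearMap.mulRight_apply, hN, mul_assoc,
      ← (adjoin k s).isIdempotentElem_toSubmodule.eq, mul_assoc (adjoin k s).toSubmodule]
    exact mul_mem_mul hb (ha hv)
  refine mul_le.2 fun v hv a ha ↦ ?_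
  induction ha using adjoin_induction generalizing v with
  | mem a ha => exact span_le (p := N.comap (LinearMap.mulRight k a)).2 (h · · a ha) hv
  | algebraMap r => exact Algebra.commutes r v ▸ mul_mem_mul ((adjoin k s).algebraMap_mem r) hv
  | add a b _ _ iha ihb => exact mul_add v a b ▸ add_mem (iha v hv) (ihb v hv)
  | mul a b _ _ iha ihb => exact mul_assoc v a b ▸ mul_mem ihb (iha v hv)

theorem commute_of_mem_adjoin_triple {a b c u : A} (hab : Commute a b) (hac : Commute a c)
    (hu : u ∈ adjoin k {a + b, a * b, c}) : Commute a u := by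
  have h : adjoin k {a + b, a * b, c} ≤ Subalgebra.centralizer k {a} := adjoin_le <| by
    rintro _ (rfl | rfl | rfl) _ rfl
    · exact (Commute.refl _).add_right hab
    · exact (Commute.refl _).mul_right hab
    · exact hac
  exact h hu a rfl

/-- The identities behind the proof are `a * a = (a + b) * a - a * b` and `b = (a + b) - a`. -/
theorem adjoin_triple_le_of_commute {a b c : A} (hab : Commute a b) (hac : Commute a c) :
    (adjoin k {a, b, c}).toSubmodule ≤
      (adjoin k {a + b, a * b, c}).toSubmodule * span k {1, a} := by
  set C := adjoin k {a + b, a * b, c}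
  set N := C.toSubmodule * span k {1, a} with hN
  have hC_mul {u x : A} (hu : u ∈ C) (hx : x ∈ N) : u * x ∈ N := by
    rw [hN, ← C.isIdempotentElem_toSubmodule.eq, mul_assoc]
    exact mul_mem_mul (M := C.toSubmodule) hu hx
  have h_span : span k {1, a} ≤ N := fun v hv ↦ one_mul v ▸ mul_mem_mul C.one_mem hv
  have h_one : 1 ∈ N := h_span (subset_span (by simp))
  have ha : a ∈ N := h_span (subset_span (by simp))
  have h_add : a + b ∈ C := subset_adjoin (by simp)
  have ha_mul : N ≤ N.comap (LinearMap.mulLeft k a) := by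
    have h_span' : span k {1, a} ≤ N.comap (LinearMap.mulLeft k a) := by
      refine span_le.2 (Set.pair_subset (by simpa using ha) ?_)
      have h := sub_mem (hC_mul h_add ha) (hC_mul (subset_adjoin (by simp) : a * b ∈ C) h_one)
      rwa [add_mul, mul_one, hab.eq, add_sub_cancel_right] at h
    refine mul_le.2 fun u hu v hv ↦ ?_
    have h : a * (u * v) = u * (a * v) := by
      rw [← mul_assoc, (commute_of_mem_adjoin_triple hab hac hu).eq, mul_assoc]
    exact (h ▸ hC_mul hu (h_span' hv) : a * (u * v) ∈ N)
  refine adjoin_le_of_mul_mem h_one ?_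
  rintro d (rfl | rfl | rfl) x hx
  · exact ha_mul hx
  · have h := sub_mem (hC_mul h_add hx) (ha_mul hx)
    rwa [LinearMap.mulLeft_apply, add_mul, add_sub_cancel_left] at h
  · exact hC_mul (subset_adjoin (by simp)) hx

theorem adjoin_triple_le_of_commute' {a b c : A} (hab : Commute a b) (hac : Commute a c) :
    (adjoin k {a, b, c}).toSubmodule ≤
      span k {1, a} * (adjoin k {a + b, a * b, c}).toSubmodule := by
  refine (adjoin_triple_le_of_commute hab hac).trans_eq (mul_comm_of_commute fun u hu v hv ↦ ?_)
  obtain ⟨r, r', rfl⟩ := mem_span_pair.1 hv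
  exact ((Commute.one_right u).smul_right r).add_right
    ((commute_of_mem_adjoin_triple hab hac hu).symm.smul_right r')

theorem commute_and_mul_mem_of_mem_adjoin {e a : A} {S : Submodule k A}
    (he : IsIdempotentElem e) (heS : e ∈ S) (hS : ∀ x ∈ S, ∀ y ∈ S, x * y ∈ S)
    (h : ∀ a ∈ s, Commute e a ∧ a * e ∈ S) (ha : a ∈ adjoin k s) : Commute e a ∧ a * e ∈ S := by
  induction ha using Algebra.adjoin_induction with
  | mem a ha => exact h a ha
  | algebraMap r => exact ⟨Algebra.commute_algebraMap_right r e,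
      Algebra.smul_def r e ▸ S.smul_mem r heS⟩
  | add a b _ _ iha ihb => exact ⟨iha.1.add_right ihb.1, add_mul a b e ▸ S.add_mem iha.2 ihb.2⟩
  | mul a b _ _ iha ihb =>
    have hab : a * b * e = a * e * (b * e) := by
      rw [mul_assoc a e, ← mul_assoc e, ihb.1.eq, mul_assoc b, he.eq, mul_assoc]
    exact ⟨iha.1.mul_right ihb.1, hab ▸ hS _ iha.2 _ ihb.2⟩

theorem adjoin_triple_le_span {a : A} {u : Aˣ} (h : Commute a u) :
    (adjoin k {a, ↑u, ↑u⁻¹}).toSubmodule ≤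
      span k (Set.range fun i : ℕ × ℤ ↦ a ^ i.1 * ↑(u ^ i.2)) := by
  refine adjoin_le_of_mul_mem (subset_span ⟨0, by simp⟩) fun x hx y hy ↦ ?_
  refine mem_comap (f := LinearMap.mulLeft k x).1 (span_le.2 ?_ hy)
  rintro _ ⟨⟨m, n⟩, rfl⟩
  have h_mul (v : Aˣ) (hv : Commute a v) : (v : A) * (a ^ m * ↑(u ^ n)) = a ^ m * ↑(v * u ^ n) := by
    rw [Units.val_mul, ← mul_assoc, ((hv.pow_left m).eq).symm, mul_assoc]
  obtain rfl | rfl | rfl := hx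
  · exact subset_span ⟨(m + 1, n), by simp [pow_succ', mul_assoc]⟩
  · exact subset_span ⟨(m, 1 + n), by simp [h_mul u h, zpow_one_add]⟩
  · exact subset_span ⟨(m, -1 + n), by simp [h_mul u⁻¹ h.units_inv_right, zpow_add]⟩

theorem adjoin_range_mkAlgHom_ι {X : Type*} (r : FreeAlgebra k X → FreeAlgebra k X → Prop) :
    adjoin k (Set.range fun x ↦ RingQuot.mkAlgHom k r (FreeAlgebra.ι k x)) = ⊤ := by
  rw [Set.range_comp' (RingQuot.mkAlgHom k r), ← AlgHom.map_adjoin, FreeAlgebra.adjoin_range_ι,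
    Algebra.map_top, AlgHom.range_eq_top]
  exact RingQuot.mkAlgHom_surjective k r

end Adjoin

section TwistedShift

variable {k K ι : Type*} [CommSemiring k] [Semiring K] [Algebra k K]

/-- The operator `F ↦ φ ∘ F ∘ τ` on functions `ι → K`, as a unit of the endomorphism ring. -/
def twistedShift (φ : K ≃ₐ[k] K) (τ : Equiv.Perm ι) : (Module.End k (ι → K))ˣ :=
  LinearMap.GeneralLinearGroup.ofLinearEquiv <|
    LinearEquiv.funCongrLeft k K τ ≪≫ₗ LinearEquiv.piCongrRight fun _ ↦ φ.toLinearEquiv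

end TwistedShift

/-! ### Linear independence -/

section LinearIndependence

theorem linearIndependent_of_leading {R M P ι : Type*} [Ring R] [AddCommGroup M] [Module R M]
    {v : ι → P → M} (deg : ι → ℕ) (top : ι → P)
    (h_top : ∀ i j, deg j ≤ deg i → v j (top i) ≠ 0 → top j = top i)
    (h_fiber : ∀ i, LinearIndepOn R (fun j ↦ v j (top i)) {j | top j = top i}) :
    LinearIndependent R v := by
  classical
  rw [linearIndependent_iff']
  by_contra!
  obtain ⟨s, g, h_sum, h_ne⟩ := this
  obtain ⟨i, hi, h_max⟩ := (s.filter (g · ≠ 0)).exists_max_image deg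
    (h_ne.imp fun i hi ↦ Finset.mem_filter.2 hi)
  rw [Finset.mem_filter] at hi
  have h_sum' : ∑ j ∈ s with top j = top i, g j • v j (top i) = 0 := by
    refine (?_ : _ = (∑ j ∈ s, g j • v j) (top i)).trans (congrFun h_sum (top i))
    rw [Finset.sum_apply]
    refine Finset.sum_subset (Finset.filter_subset _ _) fun j hj hj' ↦ ?_
    by_contra h
    have hg : g j ≠ 0 := fun h0 ↦ h (smul_eq_zero_of_left h0 _)
    have hv : v j (top i) ≠ 0 := fun h0 ↦ h (smul_eq_zero_of_right _ h0)
    exact hj' (Finset.mem_filter.2 ⟨hj, h_top i j (h_max j (Finset.mem_filter.2 ⟨hj, hg⟩)) hv⟩)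
  exact hi.2 (linearIndepOn_iff'.1 (h_fiber i) _ g (fun j hj ↦ (Finset.mem_filter.1 hj).2)
    h_sum' i (Finset.mem_filter.2 ⟨hi.1, rfl⟩))

variable {k K : Type*} [Field k] [Field K] [Algebra k K] {x z : K}

theorem linearIndependent_pow_mul_pow (h : AlgebraicIndependent k ![x, z]) :
    LinearIndependent k fun i : ℕ × ℕ ↦ x ^ i.1 * z ^ i.2 := by
  have h_inj : Function.Injective fun i : ℕ × ℕ ↦ Finsupp.equivFunOnFinite.symm ![i.1, i.2] :=
    Finsupp.equivFunOnFinite.symm.injective.comp fun i j hij ↦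
      Prod.ext (congrFun hij 0) (congrFun hij 1)
  have h_mono := ((MvPolynomial.basisMonomials (Fin 2) k).linearIndependent.comp _ h_inj).map'
    (MvPolynomial.aeval ![x, z]).toLinearMap (LinearMap.ker_eq_bot.2 h)
  simpa [Function.comp_def, MvPolynomial.aeval_monomial, Finsupp.prod_fintype] using h_mono

theorem linearIndependent_pow_mul_zpow (h : AlgebraicIndependent k ![x, z]) :
    LinearIndependent k fun i : ℕ × ℤ ↦ x ^ i.1 * z ^ i.2 := by
  have hz : z ≠ 0 := h.ne_zero 1
  refine linearIndependent_iff_finset_linearIndependent.2 fun s ↦ ?_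
  obtain ⟨N, hN⟩ := (s.image Prod.snd).finite_toSet.bddBelow
  replace hN (i : s) : N ≤ i.1.2 := hN (Finset.mem_image_of_mem _ i.2)
  have h_inj : Function.Injective fun i : s ↦ (i.1.1, (i.1.2 - N).toNat) := fun i j hij ↦ by
    have := hN i
    have := hN j
    rw [Prod.mk.injEq] at hij
    exact Subtype.ext (Prod.ext hij.1 (by omega))
  have h_eq (i : s) : z ^ N * (x ^ i.1.1 * z ^ (i.1.2 - N).toNat) = x ^ i.1.1 * z ^ i.1.2 := by
    rw [mul_left_comm, ← zpow_natCast z, ← zpow_add₀ hz, Int.toNat_of_nonneg (sub_nonneg.2 (hN i)),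
      add_sub_cancel]
  simpa only [Function.comp_def, LinearMap.mulLeft_apply, h_eq] using
    ((linearIndependent_pow_mul_pow h).comp _ h_inj).map' (LinearMap.mulLeft k (z ^ N))
      (LinearMap.ker_eq_bot.2 (mul_right_injective₀ (zpow_ne_zero N hz)))

theorem algebraicIndependent_add_mul (h : AlgebraicIndependent k ![x, z]) :
    AlgebraicIndependent k ![x + z, x * z] := by
  have h_eq : (MvPolynomial.aeval ![x, z]).comp ((Subalgebra.val _).comp
      (MvPolynomial.esymmAlgHom (Fin 2) k 2)) = MvPolynomial.aeval ![x + z, x * z] := by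
    have h_two : Finset.powersetCard 2 (Finset.univ : Finset (Fin 2)) = {Finset.univ} :=
      Finset.powersetCard_self _
    ext i
    fin_cases i <;>
      simp [MvPolynomial.esymmAlgHom, MvPolynomial.esymm, Finset.powersetCard_one, h_two]
  rw [AlgebraicIndependent, ← h_eq]
  exact (algebraicIndependent_iff_injective_aeval.1 h).comp
    (Subtype.val_injective.comp (MvPolynomial.esymmAlgHom_fin_injective k le_rfl))

end LinearIndependence

/-! ### The algebra `ℬ_t` -/

namespace AlgBt

theorem algHom_ext {B : Type*} [Ring B] [Algebra ℂ B] {f g : AlgBt q t →ₐ[ℂ] B}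
    (hc1 : f (c1 q t) = g (c1 q t)) (hc2 : f (c2 q t) = g (c2 q t)) (hd1 : f (d1 q t) = g (d1 q t))
    (hd2 : f (d2 q t) = g (d2 q t)) (hr : f (rr q t) = g (rr q t)) : f = g := by
  let π := RingQuot.mkAlgHom ℂ (BRel q t)
  have inv_eq {x x' : FB} (hx : BRel q t (x' * x) 1) (hy : BRel q t (x * x') 1)
      (h : f (π x) = g (π x)) : f (π x') = g (π x') := by
    have hx' : π x' * π x = 1 := by simpa [π] using RingQuot.mkAlgHom_rel ℂ hx
    have hy' : π x * π x' = 1 := by simpa [π] using RingQuot.mkAlgHom_rel ℂ hy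
    refine left_inv_eq_right_inv (a := f (π x)) ?_ ?_
    · rw [← map_mul, hx', map_one]
    · rw [h, ← map_mul, hy', map_one]
  refine RingQuot.ringQuot_ext' ℂ _ _ <| FreeAlgebra.hom_ext <| funext fun b ↦ ?_
  cases b with
  | c1 => exact hc1
  | c2 => exact hc2
  | c2i => exact inv_eq .c2ic2 .c2c2i hc2
  | d1 => exact hd1
  | d2 => exact hd2
  | d2i => exact inv_eq .d2id2 .d2d2i hd2
  | r => exact hr

theorem linearMap_ext_of_map_mul {A : Type*} [Ring A] [Algebra ℂ A] {Φ Ψ : AlgBt q t →ₗ[ℂ] A}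
    (hΦ : ∀ x y, Φ (x * y) = Φ x * Φ y) (hΨ : ∀ x y, Ψ (x * y) = Ψ x * Ψ y) (h_one : Φ 1 = Ψ 1)
    (hc1 : Φ (c1 q t) = Ψ (c1 q t)) (hc2 : Φ (c2 q t) = Ψ (c2 q t)) (hd1 : Φ (d1 q t) = Ψ (d1 q t))
    (hd2 : Φ (d2 q t) = Ψ (d2 q t)) (hr : Φ (rr q t) = Ψ (rr q t)) : Φ = Ψ := by
  have he : IsIdempotentElem (Φ 1) := by rw [IsIdempotentElem, ← hΦ, one_mul]
  have h : cornerRestrict he Φ hΦ rfl = cornerRestrict he Ψ hΨ h_one.symm :=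
    algHom_ext (Subtype.ext hc1) (Subtype.ext hc2) (Subtype.ext hd1) (Subtype.ext hd2)
      (Subtype.ext hr)
  exact LinearMap.ext fun x ↦ congrArg Subtype.val (DFunLike.congr_fun h x)

section Spanning

open Algebra Submodule

theorem rel {a b : FB} (h : BRel q t a b) :
    RingQuot.mkAlgHom ℂ (BRel q t) a = RingQuot.mkAlgHom ℂ (BRel q t) b :=
  RingQuot.mkAlgHom_rel ℂ h

variable (q t) in
/-- The unit `c₂` of `ℬ_t`. -/
def unitC : (AlgBt q t)ˣ where
  val := c2 q t
  inv := RingQuot.mkAlgHom ℂ (BRel q t) (gB .c2i)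
  val_inv := by
    simpa only [c2, map_mul, map_one] using rel (q := q) (t := t) .c2c2i
  inv_val := by
    simpa only [c2, map_mul, map_one] using rel (q := q) (t := t) .c2ic2

variable (q t) in
/-- The unit `d₂` of `ℬ_t`. -/
def unitD : (AlgBt q t)ˣ where
  val := d2 q t
  inv := RingQuot.mkAlgHom ℂ (BRel q t) (gB .d2i)
  val_inv := by
    simpa only [d2, map_mul, map_one] using rel (q := q) (t := t) .d2d2i
  inv_val := by
    simpa only [d2, map_mul, map_one] using rel (q := q) (t := t) .d2id2

local notation "c₁" => c1 q t
local notation "c₂" => c2 q t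
local notation "d₁" => d1 q t
local notation "d₂" => d2 q t
local notation "𝐫" => rr q t
local notation "c₂⁻¹" => (((unitC q t)⁻¹ : (AlgBt q t)ˣ) : AlgBt q t)
local notation "d₂⁻¹" => (((unitD q t)⁻¹ : (AlgBt q t)ˣ) : AlgBt q t)

theorem c1_commute_c2 : Commute c₁ c₂ := by
  simpa only [Commute, SemiconjBy, c1, c2, map_mul] using (rel (q := q) (t := t) .c2c1).symm

theorem d1_commute_d2 : Commute d₁ d₂ := by
  simpa only [Commute, SemiconjBy, d1, d2, map_mul] using (rel (q := q) (t := t) .d2d1).symm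

theorem d2_qCommute_c2 : QCommute (q⁻¹ ^ 4) d₂ c₂ := by
  simpa only [QCommute, c2, d2, map_mul, map_smul] using rel (q := q) (t := t) .d2c2

theorem d2_qCommute_c1 : QCommute (q⁻¹ ^ 2) d₂ c₁ := by
  simpa only [QCommute, c1, d2, map_mul, map_smul] using rel (q := q) (t := t) .d2c1

theorem d1_qCommute_c2 : QCommute (q⁻¹ ^ 2) d₁ c₂ := by
  simpa only [QCommute, c2, d1, map_mul, map_smul] using rel (q := q) (t := t) .d1c2

theorem d2_qCommute_rr : QCommute (q⁻¹ ^ 2) d₂ 𝐫 := by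
  simpa only [QCommute, d2, rr, map_mul, map_smul] using rel (q := q) (t := t) .d2r

theorem rr_qCommute_c2 : QCommute (q⁻¹ ^ 2) 𝐫 c₂ := by
  simpa only [QCommute, c2, rr, map_mul, map_smul] using rel (q := q) (t := t) .rc2

theorem d1_mul_c1 : d₁ * c₁ = c₁ * d₁ + (q⁻¹ ^ 2 - 1) • 𝐫 := by
  simpa only [c1, d1, rr, map_mul, map_add, map_smul] using rel (q := q) (t := t) .d1c1

theorem d1_mul_rr :
    d₁ * 𝐫 = q⁻¹ ^ 2 • (𝐫 * d₁) + ((1 - q⁻¹ ^ 2) * q⁻¹ ^ 2) • (c₁ * d₂) := by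
  simpa only [c1, d1, d2, rr, map_mul, map_add, map_smul] using rel (q := q) (t := t) .d1r

theorem rr_mul_c1 :
    𝐫 * c₁ = q⁻¹ ^ 2 • (c₁ * 𝐫) + ((1 - q⁻¹ ^ 2) * q⁻¹ ^ 2) • (c₂ * d₁) := by
  simpa only [c1, c2, d1, rr, map_mul, map_add, map_smul] using rel (q := q) (t := t) .rc1

theorem rr_mul_rr : 𝐫 * 𝐫 = (q⁻¹ ^ 4 * (1 + t ^ 2) * (q⁻¹ ^ 2 + t⁻¹ ^ 2)) • (c₂ * d₂)
    - q⁻¹ ^ 4 • (c₂ * d₁ * d₁) - q⁻¹ ^ 4 • (c₁ * c₁ * d₂) + q⁻¹ ^ 2 • (c₁ * 𝐫 * d₁) := by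
  simpa only [c1, c2, d1, d2, rr, map_mul, map_add, map_sub, map_smul] using
    rel (q := q) (t := t) .rr

variable (q t) in
/-- The commutative subalgebra of `ℬ_t` generated by `c₁` and `c₂^{±1}`. -/
def subalgebraC : Subalgebra ℂ (AlgBt q t) := adjoin ℂ {c₁, c₂, c₂⁻¹}

variable (q t) in
/-- The commutative subalgebra of `ℬ_t` generated by `d₁` and `d₂^{±1}`. -/
def subalgebraD : Subalgebra ℂ (AlgBt q t) := adjoin ℂ {d₁, d₂, d₂⁻¹}

variable (q t) in
/-- The span of `r` and the generators of `subalgebraD`, which can be moved past `subalgebraC`. -/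
def spanRD : Submodule ℂ (AlgBt q t) := span ℂ {𝐫, d₁, d₂, d₂⁻¹}

local notation "𝓒" => Subalgebra.toSubmodule (subalgebraC q t)
local notation "𝓓" => Subalgebra.toSubmodule (subalgebraD q t)
local notation "𝓥" => spanRD q t

theorem adjoin_eq_top : adjoin ℂ ({c₁, c₂, c₂⁻¹} ∪ {𝐫, d₁, d₂, d₂⁻¹}) = ⊤ := by
  refine top_unique ((adjoin_range_mkAlgHom_ι (BRel q t)).symm.trans_le (adjoin_mono ?_))
  rintro _ ⟨b, rfl⟩
  cases b
  exacts [.inl (.inl rfl), .inl (.inr (.inl rfl)), .inl (.inr (.inr rfl)), .inr (.inr (.inl rfl)),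
    .inr (.inr (.inr (.inl rfl))), .inr (.inr (.inr (.inr rfl))), .inr (.inl rfl)]

theorem spanRD_mul_subalgebraC_le (hq : q ≠ 0) : 𝓥 * 𝓒 ≤ 𝓒 * 𝓥 := by
  have hq₂ : q⁻¹ ^ 2 ≠ 0 := pow_ne_zero 2 (inv_ne_zero hq)
  have hq₄ : q⁻¹ ^ 4 ≠ 0 := pow_ne_zero 4 (inv_ne_zero hq)
  have mem {s : ℂ} {v a : AlgBt q t} (h : QCommute s v a) (hv : v ∈ 𝓥) (ha : a ∈ 𝓒) :
      v * a ∈ 𝓒 * 𝓥 := h ▸ smul_mem _ s (mul_mem_mul ha hv)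
  have hr : 𝐫 ∈ 𝓥 := subset_span (by simp)
  have hd1 : d₁ ∈ 𝓥 := subset_span (by simp)
  have hd2 : d₂ ∈ 𝓥 := subset_span (by simp)
  have hd2i : d₂⁻¹ ∈ 𝓥 := subset_span (by simp)
  have hc1 : c₁ ∈ 𝓒 := subset_adjoin (by simp)
  have hc2 : c₂ ∈ 𝓒 := subset_adjoin (by simp)
  have hc2i : c₂⁻¹ ∈ 𝓒 := subset_adjoin (by simp)
  have h_le : 𝓥 ≤ 𝓒 * 𝓥 := fun v hv ↦ one_mul v ▸ mul_mem_mul (subalgebraC q t).one_mem hv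
  refine span_mul_adjoin_le ?_
  rintro _ (rfl | rfl | rfl | rfl) _ (rfl | rfl | rfl)
  · exact rr_mul_c1 ▸ add_mem (smul_mem _ _ (mul_mem_mul hc1 hr))
      (smul_mem _ _ (mul_mem_mul hc2 hd1))
  · exact mem rr_qCommute_c2 hr hc2
  · exact mem (rr_qCommute_c2.units_inv_right (u := unitC q t) hq₂) hr hc2i
  · exact d1_mul_c1 ▸ add_mem (mul_mem_mul hc1 hd1) (smul_mem _ _ (h_le hr))
  · exact mem d1_qCommute_c2 hd1 hc2
  · exact mem (d1_qCommute_c2.units_inv_right (u := unitC q t) hq₂) hd1 hc2i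
  · exact mem d2_qCommute_c1 hd2 hc1
  · exact mem d2_qCommute_c2 hd2 hc2
  · exact mem (d2_qCommute_c2.units_inv_right (u := unitC q t) hq₄) hd2 hc2i
  · exact mem (d2_qCommute_c1.units_inv_left (u := unitD q t) hq₂) hd2i hc1
  · exact mem (d2_qCommute_c2.units_inv_left (u := unitD q t) hq₄) hd2i hc2
  · exact mem ((d2_qCommute_c2.units_inv_right (u := unitC q t) hq₄).units_inv_left
      (u := unitD q t) (inv_ne_zero hq₄)) hd2i hc2i

theorem spanRD_mul_span_le (hq : q ≠ 0) : 𝓥 * span ℂ {1, 𝐫} ≤ 𝓒 * span ℂ {1, 𝐫} * 𝓓 := by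
  set N := 𝓒 * span ℂ {1, 𝐫} * 𝓓
  have mem_one {a b : AlgBt q t} (ha : a ∈ 𝓒) (hb : b ∈ 𝓓) : a * b ∈ N :=
    mul_one a ▸ mul_mem_mul (mul_mem_mul ha (subset_span (by simp))) hb
  have mem_rr {a b : AlgBt q t} (ha : a ∈ 𝓒) (hb : b ∈ 𝓓) : a * 𝐫 * b ∈ N :=
    mul_mem_mul (mul_mem_mul ha (subset_span (by simp))) hb
  have mem_one' {b : AlgBt q t} (hb : b ∈ 𝓓) : b ∈ N := by
    simpa only [one_mul] using mem_one (subalgebraC q t).one_mem hb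
  have mem_rr' {b : AlgBt q t} (hb : b ∈ 𝓓) : 𝐫 * b ∈ N := by
    simpa only [one_mul] using mem_rr (subalgebraC q t).one_mem hb
  have mem_of_eq {x y : AlgBt q t} (h : x = y) (hy : y ∈ N) : x ∈ N := h ▸ hy
  have hc1 : c₁ ∈ 𝓒 := subset_adjoin (by simp)
  have hc2 : c₂ ∈ 𝓒 := subset_adjoin (by simp)
  have hd1 : d₁ ∈ 𝓓 := subset_adjoin (by simp)
  have hd2 : d₂ ∈ 𝓓 := subset_adjoin (by simp)
  have hd2i : d₂⁻¹ ∈ 𝓓 := subset_adjoin (by simp)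
  have hd2i_rr : d₂⁻¹ * 𝐫 = (q⁻¹ ^ 2)⁻¹ • (𝐫 * d₂⁻¹) :=
    d2_qCommute_rr.units_inv_left (u := unitD q t) (pow_ne_zero 2 (inv_ne_zero hq))
  rw [spanRD, span_mul_span, span_le]
  rintro _ ⟨_, rfl | rfl | rfl | rfl, _, rfl | rfl, rfl⟩
  · exact mem_rr' (subalgebraD q t).one_mem
  · refine mem_of_eq rr_mul_rr (add_mem (sub_mem (sub_mem ?_ ?_) ?_) ?_) <;> refine smul_mem _ _ ?_
    · exact mem_one hc2 hd2
    · exact mul_assoc c₂ _ _ ▸ mem_one hc2 ((subalgebraD q t).mul_mem hd1 hd1)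
    · exact mem_one ((subalgebraC q t).mul_mem hc1 hc1) hd2
    · exact mem_rr hc1 hd1
  · simpa using mem_one' hd1
  · exact mem_of_eq d1_mul_rr
      (add_mem (smul_mem _ _ (mem_rr' hd1)) (smul_mem _ _ (mem_one hc1 hd2)))
  · simpa using mem_one' hd2
  · exact mem_of_eq d2_qCommute_rr (smul_mem _ _ (mem_rr' hd2))
  · simpa using mem_one' hd2i
  · exact mem_of_eq hd2i_rr (smul_mem _ _ (mem_rr' hd2i))

theorem subalgebraC_mul_span_mul_subalgebraD (hq : q ≠ 0) : 𝓒 * span ℂ {1, 𝐫} * 𝓓 = ⊤ := by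
  set N := 𝓒 * span ℂ {1, 𝐫} * 𝓓 with hN
  have h_one : 1 ∈ span ℂ {1, 𝐫} := subset_span (by simp)
  have hCN : 𝓒 * N = N := by
    rw [hN, ← mul_assoc, ← mul_assoc, (subalgebraC q t).isIdempotentElem_toSubmodule.eq]
  have hND : N * 𝓓 = N := by
    rw [hN, mul_assoc, (subalgebraD q t).isIdempotentElem_toSubmodule.eq]
  have hVN : 𝓥 * N ≤ N := by
    calc 𝓥 * N = 𝓥 * 𝓒 * (span ℂ {1, 𝐫} * 𝓓) := by simp only [hN, mul_assoc]
      _ ≤ 𝓒 * 𝓥 * (span ℂ {1, 𝐫} * 𝓓) := by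
        gcongr ?_ * _
        exact spanRD_mul_subalgebraC_le hq
      _ = 𝓒 * (𝓥 * span ℂ {1, 𝐫}) * 𝓓 := by simp only [mul_assoc]
      _ ≤ 𝓒 * N * 𝓓 := by
        gcongr _ * ?_ * _
        exact spanRD_mul_span_le hq
      _ = N := by rw [hCN, hND]
  have h_top : (⊤ : Subalgebra ℂ (AlgBt q t)).toSubmodule ≤ N := by
    rw [← adjoin_eq_top]
    refine adjoin_le_of_mul_mem ?_ fun a ha x hx ↦ ?_
    · have h : 1 * 1 * 1 ∈ N :=
        mul_mem_mul (mul_mem_mul (subalgebraC q t).one_mem h_one) (subalgebraD q t).one_mem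
      rwa [one_mul, one_mul] at h
    · obtain ha | ha := ha
      · exact hCN.le (mul_mem_mul (subset_adjoin ha) hx)
      · exact hVN (mul_mem_mul (subset_span ha) hx)
  exact top_unique h_top

variable (q t) in
/-- The spanning monomials `c₁^a c₂^m r^ε d₁^k d₂^n` of `ℬ_t`, indexed by `((a, m), ε, (k, n))`. -/
def monomial (i : (ℕ × ℤ) × Fin 2 × (ℕ × ℤ)) : AlgBt q t :=
  c₁ ^ i.1.1 * ↑(unitC q t ^ i.1.2) * ![1, 𝐫] i.2.1 * (d₁ ^ i.2.2.1 * ↑(unitD q t ^ i.2.2.2))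

theorem span_range_monomial (hq : q ≠ 0) : span ℂ (Set.range (monomial q t)) = ⊤ := by
  refine top_unique ?_
  calc ⊤ = 𝓒 * span ℂ {1, 𝐫} * 𝓓 := (subalgebraC_mul_span_mul_subalgebraD hq).symm
    _ ≤ span ℂ (Set.range fun i : ℕ × ℤ ↦ c₁ ^ i.1 * ↑(unitC q t ^ i.2)) * span ℂ {1, 𝐫} *
        span ℂ (Set.range fun i : ℕ × ℤ ↦ d₁ ^ i.1 * ↑(unitD q t ^ i.2)) := by
      gcongr ?_ * _ * ?_
      exacts [adjoin_triple_le_span (u := unitC q t) c1_commute_c2,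
        adjoin_triple_le_span (u := unitD q t) d1_commute_d2]
    _ ≤ span ℂ (Set.range (monomial q t)) := by
      rw [span_mul_span, span_mul_span]
      refine span_mono ?_
      rintro _ ⟨_, ⟨_, ⟨i, rfl⟩, v, hv, rfl⟩, _, ⟨j, rfl⟩, rfl⟩
      obtain rfl | rfl := hv
      · exact ⟨(i, 0, j), by simp only [monomial, Matrix.cons_val_zero]⟩
      · exact ⟨(i, 1, j), by simp only [monomial, Matrix.cons_val_one, Matrix.cons_val_fin_one]⟩

end Spanning

end AlgBt

/-! ### The double affine Hecke algebra -/

namespace DAHA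

local notation "𝐓" => T q t
local notation "𝐓⁻¹" => Ti q t
local notation "X₁" => X1 q t
local notation "X₂" => X2 q t
local notation "Y₁" => Y1 q t
local notation "Y₂" => Y2 q t

section Relations

theorem rel {a b : FD} (h : DRel q t a b) :
    RingQuot.mkAlgHom ℂ (DRel q t) a = RingQuot.mkAlgHom ℂ (DRel q t) b :=
  RingQuot.mkAlgHom_rel ℂ h

/-- The generator `T` as a unit. -/
def unitT : (DAHA q t)ˣ where
  val := 𝐓
  inv := 𝐓⁻¹
  val_inv := by simpa [T, Ti] using rel (q := q) (t := t) .TTi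
  inv_val := by simpa [Ti, T] using rel (q := q) (t := t) .TiT

/-- The generator `X₁` as a unit. -/
def unitX1 : (DAHA q t)ˣ where
  val := X₁
  inv := X1i q t
  val_inv := by simpa [X1, X1i] using rel (q := q) (t := t) .X1X1i
  inv_val := by simpa [X1i, X1] using rel (q := q) (t := t) .X1iX1

/-- The generator `X₂` as a unit. -/
def unitX2 : (DAHA q t)ˣ where
  val := X₂
  inv := X2i q t
  val_inv := by simpa [X2, X2i] using rel (q := q) (t := t) .X2X2i
  inv_val := by simpa [X2i, X2] using rel (q := q) (t := t) .X2iX2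

/-- The generator `Y₁` as a unit. -/
def unitY1 : (DAHA q t)ˣ where
  val := Y₁
  inv := Y1i q t
  val_inv := by simpa [Y1, Y1i] using rel (q := q) (t := t) .Y1Y1i
  inv_val := by simpa [Y1i, Y1] using rel (q := q) (t := t) .Y1iY1

/-- The generator `Y₂` as a unit. -/
def unitY2 : (DAHA q t)ˣ where
  val := Y₂
  inv := Y2i q t
  val_inv := by simpa [Y2, Y2i] using rel (q := q) (t := t) .Y2Y2i
  inv_val := by simpa [Y2i, Y2] using rel (q := q) (t := t) .Y2iY2

/-- `X₁X₂` as a unit. -/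
def unitX : (DAHA q t)ˣ := unitX1 * unitX2

/-- `Y₁Y₂` as a unit. -/
def unitY : (DAHA q t)ˣ := unitY1 * unitY2

theorem T_mul_Ti : 𝐓 * 𝐓⁻¹ = 1 := unitT.mul_inv

theorem Ti_mul_T : 𝐓⁻¹ * 𝐓 = 1 := unitT.inv_mul

theorem X1_mul_X1i : X₁ * X1i q t = 1 := unitX1.mul_inv

theorem X1i_mul_X1 : X1i q t * X₁ = 1 := unitX1.inv_mul

theorem T_mul_X1_mul_T : 𝐓 * X₁ * 𝐓 = X₂ := by
  simpa [T, X1, X2] using rel (q := q) (t := t) .TX1T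

theorem Ti_mul_Y1_mul_Ti : 𝐓⁻¹ * Y₁ * 𝐓⁻¹ = Y₂ := by
  simpa [Ti, Y1, Y2] using rel (q := q) (t := t) .TiY1Ti

theorem X1_commute_X2 : Commute X₁ X₂ := by
  simpa [commute_iff_eq, X1, X2] using rel (q := q) (t := t) .Xcomm

theorem Y1_commute_Y2 : Commute Y₁ Y₂ := by
  simpa [commute_iff_eq, Y1, Y2] using rel (q := q) (t := t) .Ycomm

theorem Y1_qCommute_X1_mul_X2 : QCommute (q ^ 2) Y₁ (X₁ * X₂) := by
  simpa [QCommute, Y1, X1, X2] using rel (q := q) (t := t) .YXX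

theorem X1i_mul_Y2 : X1i q t * Y₂ = Y₂ * X1i q t * 𝐓⁻¹ * 𝐓⁻¹ := by
  simpa [X1i, Y2, Ti] using rel (q := q) (t := t) .X1iY2

theorem T_mul_T (ht : t ≠ 0) : 𝐓 * 𝐓 = 1 + κ • 𝐓 := by
  have hecke : (𝐓 + t⁻¹ • 1) * (𝐓 - t • 1) = 0 := by
    simpa [T, Algebra.algebraMap_eq_smul_one] using rel (q := q) (t := t) .hecke
  rw [← sub_eq_zero, ← hecke]
  simp only [add_mul, mul_sub, smul_mul_assoc, mul_smul_comm, one_mul, mul_one]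
  match_scalars <;> field_simp
  ring

theorem Ti_eq (ht : t ≠ 0) : 𝐓⁻¹ = 𝐓 - κ • 1 := by
  refine left_inv_eq_right_inv Ti_mul_T ?_
  rw [mul_sub, T_mul_T ht, mul_smul_comm, mul_one, add_sub_cancel_right]

theorem T_eq (ht : t ≠ 0) : 𝐓 = 𝐓⁻¹ + κ • 1 := by
  rw [Ti_eq ht, sub_add_cancel]

theorem Ti_mul_Ti (ht : t ≠ 0) : 𝐓⁻¹ * 𝐓⁻¹ = 1 - κ • 𝐓⁻¹ := by
  nth_rw 1 [Ti_eq ht]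
  rw [sub_mul, T_mul_Ti, smul_mul_assoc, one_mul]

theorem T_mul_X1 : 𝐓 * X₁ = X₂ * 𝐓⁻¹ := by
  rw [← T_mul_X1_mul_T, mul_assoc, T_mul_Ti, mul_one]

theorem X1_mul_T : X₁ * 𝐓 = 𝐓⁻¹ * X₂ := by
  rw [← T_mul_X1_mul_T, ← mul_assoc, ← mul_assoc, Ti_mul_T, one_mul]

theorem T_mul_Y2 : 𝐓 * Y₂ = Y₁ * 𝐓⁻¹ := by
  rw [← Ti_mul_Y1_mul_Ti, ← mul_assoc, ← mul_assoc, T_mul_Ti, one_mul]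

theorem Y2_mul_T : Y₂ * 𝐓 = 𝐓⁻¹ * Y₁ := by
  rw [← Ti_mul_Y1_mul_Ti, mul_assoc, Ti_mul_T, mul_one]

theorem Ti_mul_X1 (ht : t ≠ 0) : 𝐓⁻¹ * X₁ = X₂ * 𝐓⁻¹ - κ • X₁ := by
  rw [← T_mul_X1, Ti_eq ht, sub_mul, smul_mul_assoc, one_mul]

theorem Ti_mul_X2 (ht : t ≠ 0) : 𝐓⁻¹ * X₂ = X₁ * 𝐓⁻¹ + κ • X₁ := by
  rw [← X1_mul_T, T_eq ht, mul_add, mul_smul_comm, mul_one]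

theorem Ti_mul_Y1 (ht : t ≠ 0) : 𝐓⁻¹ * Y₁ = Y₂ * 𝐓⁻¹ + κ • Y₂ := by
  rw [← Y2_mul_T, T_eq ht, mul_add, mul_smul_comm, mul_one]

theorem Ti_mul_Y2 (ht : t ≠ 0) : 𝐓⁻¹ * Y₂ = Y₁ * 𝐓⁻¹ - κ • Y₂ := by
  rw [← T_mul_Y2, Ti_eq ht, sub_mul, smul_mul_assoc, one_mul]

theorem T_commute_X1_mul_X2 : Commute 𝐓 (X₁ * X₂) := by
  calc 𝐓 * (X₁ * X₂) = X₂ * (𝐓⁻¹ * X₂) := by rw [← mul_assoc, T_mul_X1, mul_assoc]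
    _ = X₁ * X₂ * 𝐓 := by rw [← X1_mul_T, ← mul_assoc, X1_commute_X2.eq]

theorem T_commute_Y1_mul_Y2 : Commute 𝐓 (Y₁ * Y₂) := by
  calc 𝐓 * (Y₁ * Y₂) = Y₁ * (𝐓⁻¹ * Y₁) := by
        rw [Y1_commute_Y2.eq, ← mul_assoc, T_mul_Y2, mul_assoc]
    _ = Y₁ * Y₂ * 𝐓 := by rw [← Y2_mul_T, ← mul_assoc]

theorem T_commute_X1_add_X2 (ht : t ≠ 0) : Commute 𝐓 (X₁ + X₂) := by
  rw [commute_iff_eq, T_eq ht, add_mul, mul_add, mul_add, Ti_mul_X1 ht, Ti_mul_X2 ht, add_mul]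
  simp only [smul_mul_assoc, mul_smul_comm, mul_add, one_mul, mul_one]
  abel

theorem T_commute_Y1_add_Y2 (ht : t ≠ 0) : Commute 𝐓 (Y₁ + Y₂) := by
  rw [commute_iff_eq, T_eq ht, add_mul, mul_add, mul_add, Ti_mul_Y1 ht, Ti_mul_Y2 ht, add_mul]
  simp only [smul_mul_assoc, mul_smul_comm, mul_add, one_mul, mul_one]
  abel

theorem Ti_commute_Y1_mul_Y2 : Commute 𝐓⁻¹ (Y₁ * Y₂) :=
  T_commute_Y1_mul_Y2.units_inv_left (u := unitT)

theorem Y1_eq : Y₁ = 𝐓 * Y₂ * 𝐓 := by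
  rw [T_mul_Y2, mul_assoc, Ti_mul_T, mul_one]

theorem X1_eq : X₁ = 𝐓⁻¹ * X₂ * 𝐓⁻¹ := by
  rw [← X1_mul_T, mul_assoc, T_mul_Ti, mul_one]

theorem Ti_commute_X1_mul_X2 : Commute 𝐓⁻¹ (X₁ * X₂) :=
  T_commute_X1_mul_X2.units_inv_left (u := unitT)

theorem X1_mul_X2_qCommute_Y1 (hq : q ≠ 0) : QCommute (q⁻¹ ^ 2) (X₁ * X₂) Y₁ :=
  inv_pow q 2 ▸ Y1_qCommute_X1_mul_X2.symm (pow_ne_zero 2 hq)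

theorem X1_mul_X2_qCommute_Y2 (hq : q ≠ 0) : QCommute (q⁻¹ ^ 2) (X₁ * X₂) Y₂ := by
  have hTi : QCommute (1 : ℂ) (X₁ * X₂) 𝐓⁻¹ := .of_commute Ti_commute_X1_mul_X2.symm
  simpa [Ti_mul_Y1_mul_Ti] using (hTi.mul_right (X1_mul_X2_qCommute_Y1 hq)).mul_right hTi

theorem X2_mul_Y2_eq_mul_Ti_mul_Ti (hq : q ≠ 0) :
    X₂ * Y₂ = q⁻¹ ^ 2 • (Y₂ * X₂ * (𝐓⁻¹ * 𝐓⁻¹)) := by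
  have hX2 : X1i q t * (X₁ * X₂) = X₂ := by rw [← mul_assoc, X1i_mul_X1, one_mul]
  calc X₂ * Y₂ = X1i q t * (X₁ * X₂ * Y₂) := by rw [← mul_assoc, hX2]
    _ = q⁻¹ ^ 2 • (X1i q t * Y₂ * (X₁ * X₂)) := by
      rw [X1_mul_X2_qCommute_Y2 hq, mul_smul_comm, mul_assoc]
    _ = q⁻¹ ^ 2 • (Y₂ * X1i q t * ((𝐓⁻¹ * 𝐓⁻¹) * (X₁ * X₂))) := by
      rw [X1i_mul_Y2]; simp only [mul_assoc]
    _ = q⁻¹ ^ 2 • (Y₂ * (X1i q t * (X₁ * X₂)) * (𝐓⁻¹ * 𝐓⁻¹)) := by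
      rw [(Ti_commute_X1_mul_X2.mul_left Ti_commute_X1_mul_X2).eq]; simp only [mul_assoc]
    _ = q⁻¹ ^ 2 • (Y₂ * X₂ * (𝐓⁻¹ * 𝐓⁻¹)) := by rw [hX2]

theorem X1_mul_Y2_eq_mul_T_mul_T : X₁ * Y₂ = Y₂ * (𝐓 * 𝐓) * X₁ := by
  have h : X1i q t * Y₂ * (𝐓 * 𝐓) = Y₂ * X1i q t := by
    rw [X1i_mul_Y2, mul_assoc, mul_mul_of_mul_eq Ti_mul_T, one_mul, mul_assoc, Ti_mul_T, mul_one]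
  calc X₁ * Y₂ = X₁ * (Y₂ * X1i q t) * X₁ := by
        rw [mul_assoc, mul_assoc, X1i_mul_X1, mul_one]
    _ = Y₂ * (𝐓 * 𝐓) * X₁ := by
        rw [← h, mul_assoc (X1i q t), ← mul_assoc, X1_mul_X1i, one_mul]

theorem T_mul_X1_mul_Y2_mul_T : 𝐓 * (X₁ * Y₂) * 𝐓 = Y₁ * X₂ := by
  calc 𝐓 * (X₁ * Y₂) * 𝐓 = 𝐓 * Y₂ * 𝐓 * (𝐓 * X₁ * 𝐓) := by
        rw [X1_mul_Y2_eq_mul_T_mul_T]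
        simp only [mul_assoc]
    _ = Y₁ * X₂ := by rw [← Y1_eq, T_mul_X1_mul_T]

theorem X2_mul_Y2 (hq : q ≠ 0) (ht : t ≠ 0) :
    X₂ * Y₂ = q⁻¹ ^ 2 • (Y₂ * X₂ - κ • (Y₂ * X₂ * 𝐓⁻¹)) := by
  rw [X2_mul_Y2_eq_mul_Ti_mul_Ti hq, Ti_mul_Ti ht, mul_sub, mul_one, mul_smul_comm]

theorem X1_mul_Y2 (ht : t ≠ 0) : X₁ * Y₂ = Y₂ * X₁ + κ • (Y₂ * X₂ * 𝐓⁻¹) := by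
  rw [X1_mul_Y2_eq_mul_T_mul_T, T_mul_T ht, mul_assoc, add_mul, one_mul, smul_mul_assoc, T_mul_X1,
    mul_add, mul_smul_comm, mul_assoc]

theorem X1_mul_Y1 (hq : q ≠ 0) (ht : t ≠ 0) :
    X₁ * Y₁ = q⁻¹ ^ 2 • (Y₁ * X₁ - κ • (Y₂ * X₂ * 𝐓⁻¹)) := by
  calc X₁ * Y₁ = 𝐓⁻¹ * (X₂ * Y₂) * 𝐓 := by
        nth_rw 1 [X1_eq, Y1_eq]
        simp only [mul_assoc, mul_mul_of_mul_eq Ti_mul_T, one_mul]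
    _ = q⁻¹ ^ 2 • (𝐓⁻¹ * Y₂ * (X₂ * 𝐓⁻¹)) := by
        rw [X2_mul_Y2_eq_mul_Ti_mul_Ti hq]
        simp only [mul_smul_comm, smul_mul_assoc, mul_assoc, Ti_mul_T, mul_one]
    _ = q⁻¹ ^ 2 • (Y₁ * (𝐓⁻¹ * (X₂ * 𝐓⁻¹)) - κ • (Y₂ * X₂ * 𝐓⁻¹)) := by
        rw [Ti_mul_Y2 ht, sub_mul, smul_mul_assoc, mul_assoc, mul_assoc]
    _ = q⁻¹ ^ 2 • (Y₁ * X₁ - κ • (Y₂ * X₂ * 𝐓⁻¹)) := by rw [← mul_assoc 𝐓⁻¹, ← X1_eq]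

theorem X2_mul_Y1 (hq : q ≠ 0) (ht : t ≠ 0) :
    X₂ * Y₁ = Y₁ * X₂ + (q⁻¹ ^ 2 * κ) • (Y₂ * X₂ * 𝐓⁻¹) := by
  have h : X₂ * Y₂ * 𝐓 = q⁻¹ ^ 2 • (Y₂ * X₂ * 𝐓⁻¹) := by
    rw [X2_mul_Y2_eq_mul_Ti_mul_Ti hq, smul_mul_assoc]
    simp only [mul_assoc, Ti_mul_T, mul_one]
  calc X₂ * Y₁ = 𝐓 * X₁ * (𝐓 * 𝐓) * Y₂ * 𝐓 := by
        rw [← T_mul_X1_mul_T, Y1_eq]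
        simp only [mul_assoc]
    _ = 𝐓 * (X₁ * Y₂) * 𝐓 + κ • (𝐓 * X₁ * 𝐓 * Y₂ * 𝐓) := by
        rw [T_mul_T ht]
        simp only [mul_add, add_mul, mul_smul_comm, smul_mul_assoc, mul_assoc, one_mul]
    _ = Y₁ * X₂ + (q⁻¹ ^ 2 * κ) • (Y₂ * X₂ * 𝐓⁻¹) := by
        rw [T_mul_X1_mul_Y2_mul_T, T_mul_X1_mul_T, h, smul_smul, mul_comm κ]

theorem X2_qCommute_Y1_mul_Y2 (hq : q ≠ 0) : QCommute (q⁻¹ ^ 2) X₂ (Y₁ * Y₂) := by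
  calc X₂ * (Y₁ * Y₂) = X₂ * Y₂ * Y₁ := by rw [Y1_commute_Y2.eq, mul_assoc]
    _ = q⁻¹ ^ 2 • (Y₂ * (X₂ * 𝐓⁻¹ * (𝐓⁻¹ * Y₁))) := by
        rw [X2_mul_Y2_eq_mul_Ti_mul_Ti hq]
        simp only [smul_mul_assoc, mul_assoc]
    _ = q⁻¹ ^ 2 • (Y₂ * (𝐓 * (X₁ * Y₂) * 𝐓)) := by
        rw [← T_mul_X1, ← Y2_mul_T]
        simp only [mul_assoc]
    _ = q⁻¹ ^ 2 • (Y₁ * Y₂ * X₂) := by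
        rw [T_mul_X1_mul_Y2_mul_T, ← mul_assoc, Y1_commute_Y2.eq]

theorem X1_qCommute_Y1_mul_Y2 (hq : q ≠ 0) : QCommute (q⁻¹ ^ 2) X₁ (Y₁ * Y₂) := by
  have hTi : QCommute (1 : ℂ) 𝐓⁻¹ (Y₁ * Y₂) := .of_commute Ti_commute_Y1_mul_Y2
  rw [X1_eq]
  simpa using (hTi.mul_left (X2_qCommute_Y1_mul_Y2 hq)).mul_left hTi

end Relations

section Symmetrizer

theorem T_mul_eSym (ht : t ≠ 0) : 𝐓 * 𝐞 = t • 𝐞 := by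
  rw [eSym, mul_smul_comm, mul_add, mul_one, mul_smul_comm, T_mul_T ht]
  match_scalars <;> field_simp
  ring

theorem Ti_mul_eSym (ht : t ≠ 0) : 𝐓⁻¹ * 𝐞 = t⁻¹ • 𝐞 := by
  rw [eq_inv_smul_iff₀ ht, ← mul_smul_comm, ← T_mul_eSym ht, ← mul_assoc, Ti_mul_T, one_mul]

theorem eSym_mul_of_T_mul (ht2 : t ^ 2 ≠ -1) {x : DAHA q t} (hx : 𝐓 * x = t • x) : 𝐞 * x = x := by
  have h := one_add_sq_ne_zero ht2
  rw [eSym, smul_mul_assoc, add_mul, one_mul, smul_mul_assoc, hx, inv_smul_eq_iff₀ h]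
  module

theorem isIdempotentElem_eSym (ht : t ≠ 0) (ht2 : t ^ 2 ≠ -1) : IsIdempotentElem 𝐞 :=
  eSym_mul_of_T_mul ht2 (T_mul_eSym ht)

theorem eSym_commute {x : DAHA q t} (hx : Commute 𝐓 x) : Commute 𝐞 x :=
  (((Commute.one_left x).add_left (hx.smul_left t)).smul_left _)

/-- The element `Y₁X₁ + t⁻²Y₂X₂`, which represents the image of `r` in the sense that
`e(t⁻²Y₁X₁ + Y₂X₂)e = (Y₁X₁ + t⁻²Y₂X₂)e`. -/
def rLift (q t : ℂ) : DAHA q t := Y1 q t * X1 q t + t⁻¹ ^ 2 • (Y2 q t * X2 q t)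

theorem T_mul_Y2_mul_X2 : 𝐓 * (Y₂ * X₂) = Y₁ * X₁ * 𝐓 := by
  rw [← mul_assoc, T_mul_Y2, mul_assoc, ← X1_mul_T, mul_assoc]

theorem T_mul_Y1_mul_X1 (ht : t ≠ 0) : 𝐓 * (Y₁ * X₁) = Y₂ * X₂ * 𝐓⁻¹ + κ • (Y₁ * X₁) := by
  have h : Y₁ * X₁ = 𝐓 * (Y₂ * X₂) * 𝐓⁻¹ := by
    rw [T_mul_Y2_mul_X2, mul_assoc _ 𝐓, T_mul_Ti, mul_one]
  nth_rw 1 [h]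
  rw [mul_assoc 𝐓, ← mul_assoc, T_mul_T ht, add_mul, one_mul, smul_mul_assoc, ← mul_assoc 𝐓, ← h]

theorem eSym_mul_mul_eSym_eq_rLift_mul_eSym (ht : t ≠ 0) (ht2 : t ^ 2 ≠ -1) :
    𝐞 * (t⁻¹ ^ 2 • (Y₁ * X₁) + Y₂ * X₂) * 𝐞 = rLift q t * 𝐞 := by
  have h := one_add_sq_ne_zero ht2
  have hT : 𝐓 * (t⁻¹ ^ 2 • (Y₁ * X₁) + Y₂ * X₂) * 𝐞 =
      (t⁻¹ ^ 2 * κ + t) • (Y₁ * X₁ * 𝐞) + t⁻¹ ^ 3 • (Y₂ * X₂ * 𝐞) := by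
    rw [mul_add, mul_smul_comm, T_mul_Y1_mul_X1 ht, T_mul_Y2_mul_X2]
    simp only [add_mul, smul_mul_assoc, mul_assoc, Ti_mul_eSym ht, T_mul_eSym ht, mul_smul_comm]
    module
  rw [mul_assoc, eSym, smul_mul_assoc, add_mul, one_mul, smul_mul_assoc, ← eSym, ← mul_assoc, hT,
    inv_smul_eq_iff₀ h]
  simp only [rLift, add_mul, smul_mul_assoc]
  match_scalars <;> field_simp <;> ring

theorem eSym_mul_rLift_mul_eSym (ht : t ≠ 0) (ht2 : t ^ 2 ≠ -1) :
    𝐞 * rLift q t * 𝐞 = rLift q t * 𝐞 := by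
  rw [mul_assoc, ← eSym_mul_mul_eSym_eq_rLift_mul_eSym ht ht2, mul_assoc, ← mul_assoc,
    isIdempotentElem_eSym ht ht2]

end Symmetrizer

section SphericalRelations

theorem X1_add_X2_mul_Y1_add_Y2_mul_eSym (hq : q ≠ 0) (ht : t ≠ 0) :
    (X₁ + X₂) * (Y₁ + Y₂) * 𝐞 =
      ((Y₁ + Y₂) * (X₁ + X₂) + (q⁻¹ ^ 2 - 1) • rLift q t) * 𝐞 := by
  simp only [rLift, add_mul, mul_add, sub_mul, smul_mul_assoc, smul_add, smul_sub, mul_assoc,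
    X1_mul_Y1 hq ht, X1_mul_Y2 ht, X2_mul_Y1 hq ht, X2_mul_Y2 hq ht, Ti_mul_eSym ht, mul_smul_comm]
  match_scalars <;> field_simp <;> ring

theorem X1_add_X2_mul_rLift_mul_eSym (hq : q ≠ 0) (ht : t ≠ 0) :
    (X₁ + X₂) * rLift q t * 𝐞 = (q⁻¹ ^ 2 • (rLift q t * (X₁ + X₂)) +
      (1 - q⁻¹ ^ 2) • ((Y₁ + Y₂) * (X₁ * X₂))) * 𝐞 := by
  simp only [rLift, add_mul, mul_add, sub_mul, mul_sub, smul_mul_assoc, mul_smul_comm, smul_add,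
    smul_sub, mul_assoc, mul_mul_of_mul_eq (X1_mul_Y1 hq ht), mul_mul_of_mul_eq (X1_mul_Y2 ht),
    mul_mul_of_mul_eq (X2_mul_Y1 hq ht), mul_mul_of_mul_eq (X2_mul_Y2 hq ht),
    mul_mul_of_mul_eq X1_commute_X2.symm.eq, mul_mul_of_mul_eq (Ti_mul_X1 ht),
    mul_mul_of_mul_eq (Ti_mul_X2 ht), Ti_mul_eSym ht]
  match_scalars <;> field_simp <;> ring

theorem rLift_mul_Y1_add_Y2_mul_eSym (hq : q ≠ 0) (ht : t ≠ 0) :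
    rLift q t * (Y₁ + Y₂) * 𝐞 = (q⁻¹ ^ 2 • ((Y₁ + Y₂) * rLift q t) +
      (1 - q⁻¹ ^ 2) • ((Y₁ * Y₂) * (X₁ + X₂))) * 𝐞 := by
  simp only [rLift, add_mul, mul_add, sub_mul, mul_sub, smul_mul_assoc, mul_smul_comm, smul_add,
    smul_sub, mul_assoc, mul_mul_of_mul_eq (X1_mul_Y1 hq ht), mul_mul_of_mul_eq (X1_mul_Y2 ht),
    mul_mul_of_mul_eq (X2_mul_Y1 hq ht), mul_mul_of_mul_eq (X2_mul_Y2 hq ht),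
    mul_mul_of_mul_eq Y1_commute_Y2.symm.eq, Ti_mul_eSym ht]
  match_scalars <;> field_simp <;> ring

theorem rLift_mul_rLift_mul_eSym (hq : q ≠ 0) (ht : t ≠ 0) :
    rLift q t * rLift q t * 𝐞 = (((1 + t ^ 2) * (q⁻¹ ^ 2 + t⁻¹ ^ 2)) • (Y₁ * Y₂ * (X₁ * X₂))
      - q⁻¹ ^ 2 • (Y₁ * Y₂ * (X₁ + X₂) * (X₁ + X₂))
      - q⁻¹ ^ 2 • ((Y₁ + Y₂) * (Y₁ + Y₂) * (X₁ * X₂))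
      + q⁻¹ ^ 2 • ((Y₁ + Y₂) * rLift q t * (X₁ + X₂))) * 𝐞 := by
  simp only [rLift, add_mul, mul_add, sub_mul, mul_sub, smul_mul_assoc, mul_smul_comm, smul_add,
    smul_sub, mul_assoc, mul_mul_of_mul_eq (X1_mul_Y1 hq ht), mul_mul_of_mul_eq (X1_mul_Y2 ht),
    mul_mul_of_mul_eq (X2_mul_Y1 hq ht), mul_mul_of_mul_eq (X2_mul_Y2 hq ht),
    mul_mul_of_mul_eq X1_commute_X2.symm.eq, mul_mul_of_mul_eq (Ti_mul_X1 ht),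
    mul_mul_of_mul_eq (Ti_mul_X2 ht), mul_mul_of_mul_eq Y1_commute_Y2.symm.eq, Ti_mul_eSym ht]
  match_scalars <;> field_simp <;> ring

end SphericalRelations

local notation "X₁₂⁻¹" => ((unitX⁻¹ : (DAHA q t)ˣ) : DAHA q t)
local notation "Y₁₂⁻¹" => ((unitY⁻¹ : (DAHA q t)ˣ) : DAHA q t)

/-! ### The Harish-Chandra homomorphism -/

section HarishChandra

theorem X1_add_X2_qCommute_Y1_mul_Y2 (hq : q ≠ 0) : QCommute (q⁻¹ ^ 2) (X₁ + X₂) (Y₁ * Y₂) :=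
  (X1_qCommute_Y1_mul_Y2 hq).add_left (X2_qCommute_Y1_mul_Y2 hq)

theorem X1_mul_X2_qCommute_Y1_add_Y2 (hq : q ≠ 0) : QCommute (q⁻¹ ^ 2) (X₁ * X₂) (Y₁ + Y₂) :=
  (X1_mul_X2_qCommute_Y1 hq).add_right (X1_mul_X2_qCommute_Y2 hq)

theorem X1_mul_X2_qCommute_Y1_mul_Y2 (hq : q ≠ 0) : QCommute (q⁻¹ ^ 4) (X₁ * X₂) (Y₁ * Y₂) := by
  simpa only [← pow_add] using (X1_mul_X2_qCommute_Y1 hq).mul_right (X1_mul_X2_qCommute_Y2 hq)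

theorem X1_mul_X2_commute_X1 : Commute (X₁ * X₂) X₁ :=
  (Commute.refl _).mul_left X1_commute_X2.symm

theorem X1_mul_X2_commute_X2 : Commute (X₁ * X₂) X₂ :=
  X1_commute_X2.mul_left (Commute.refl _)

theorem Y1_mul_Y2_commute_Y1 : Commute (Y₁ * Y₂) Y₁ :=
  (Commute.refl _).mul_left Y1_commute_Y2.symm

theorem Y1_mul_Y2_commute_Y2 : Commute (Y₁ * Y₂) Y₂ :=
  Y1_commute_Y2.mul_left (Commute.refl _)

theorem X1_mul_X2_qCommute_rLift (hq : q ≠ 0) : QCommute (q⁻¹ ^ 2) (X₁ * X₂) (rLift q t) := by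
  have hX1 : QCommute (1 : ℂ) (X₁ * X₂) X₁ := .of_commute X1_mul_X2_commute_X1
  have hX2 : QCommute (1 : ℂ) (X₁ * X₂) X₂ := .of_commute X1_mul_X2_commute_X2
  have h := ((X1_mul_X2_qCommute_Y1 hq).mul_right hX1).add_right
    (((X1_mul_X2_qCommute_Y2 hq).mul_right hX2).smul_right (t⁻¹ ^ 2))
  rwa [mul_one] at h

theorem rLift_qCommute_Y1_mul_Y2 (hq : q ≠ 0) : QCommute (q⁻¹ ^ 2) (rLift q t) (Y₁ * Y₂) := by
  have hY1 : QCommute (1 : ℂ) Y₁ (Y₁ * Y₂) := .of_commute Y1_mul_Y2_commute_Y1.symm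
  have hY2 : QCommute (1 : ℂ) Y₂ (Y₁ * Y₂) := .of_commute Y1_mul_Y2_commute_Y2.symm
  have h := (hY1.mul_left (X1_qCommute_Y1_mul_Y2 hq)).add_left
    ((hY2.mul_left (X2_qCommute_Y1_mul_Y2 hq)).smul_left (t⁻¹ ^ 2))
  rwa [one_mul] at h

variable (q t) in
/-- Elements `a` of the DAHA such that the Harish-Chandra homomorphism sends the generators of
`ℬ_t` to `a * e`. -/
def hcGen : BGen → DAHA q t
  | .c1 => Y₁ + Y₂
  | .c2 => q ^ 2 • (Y₁ * Y₂)
  | .c2i => q⁻¹ ^ 2 • Y₁₂⁻¹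
  | .d1 => X₁ + X₂
  | .d2 => q ^ 2 • (X₁ * X₂)
  | .d2i => q⁻¹ ^ 2 • X₁₂⁻¹
  | .r => rLift q t

theorem T_commute_unitX_inv : Commute 𝐓 X₁₂⁻¹ :=
  (T_commute_X1_mul_X2 : Commute 𝐓 ↑(unitX (q := q) (t := t))).units_inv_right

theorem T_commute_unitY_inv : Commute 𝐓 Y₁₂⁻¹ :=
  (T_commute_Y1_mul_Y2 : Commute 𝐓 ↑(unitY (q := q) (t := t))).units_inv_right

theorem hcGen_mem_cornerStabilizer (ht : t ≠ 0) (ht2 : t ^ 2 ≠ -1) (b : BGen) :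
    hcGen q t b ∈ cornerStabilizer ℂ (isIdempotentElem_eSym (q := q) ht ht2) := by
  have of_commute {x : DAHA q t} (hx : Commute 𝐓 x) : 𝐞 * x * 𝐞 = x * 𝐞 := by
    rw [(eSym_commute hx).eq, mul_assoc, (isIdempotentElem_eSym ht ht2).eq]
  cases b with
  | c1 => exact of_commute (T_commute_Y1_add_Y2 ht)
  | c2 => exact of_commute (T_commute_Y1_mul_Y2.smul_right _)
  | c2i => exact of_commute (T_commute_unitY_inv.smul_right _)
  | d1 => exact of_commute (T_commute_X1_add_X2 ht)
  | d2 => exact of_commute (T_commute_X1_mul_X2.smul_right _)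
  | d2i => exact of_commute (T_commute_unitX_inv.smul_right _)
  | r => exact eSym_mul_rLift_mul_eSym ht ht2

theorem lift_hcGen_mul_eSym (hq : q ≠ 0) (ht : t ≠ 0) {x y : FB} (h : BRel q t x y) :
    FreeAlgebra.lift ℂ (hcGen q t) x * 𝐞 = FreeAlgebra.lift ℂ (hcGen q t) y * 𝐞 := by
  have hX : X₁ * X₂ * X₁₂⁻¹ = 1 := unitX.mul_inv
  have hX' : X₁₂⁻¹ * (X₁ * X₂) = 1 := unitX.inv_mul
  have hY : Y₁ * Y₂ * Y₁₂⁻¹ = 1 := unitY.mul_inv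
  have hY' : Y₁₂⁻¹ * (Y₁ * Y₂) = 1 := unitY.inv_mul
  cases h <;> simp only [gB, map_mul, map_add, map_sub, map_smul, map_one,
    FreeAlgebra.lift_ι_apply, hcGen]
  case c2c2i => simp [hY, hq]
  case c2ic2 => simp [hY', hq]
  case d2d2i => simp [hX, hq]
  case d2id2 => simp [hX', hq]
  case c2c1 =>
    rw [((Y1_mul_Y2_commute_Y1.add_right Y1_mul_Y2_commute_Y2).smul_left _).eq]
  case d2d1 =>
    rw [((X1_mul_X2_commute_X1.add_right X1_mul_X2_commute_X2).smul_left _).eq]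
  case d2c2 => rw [((X1_mul_X2_qCommute_Y1_mul_Y2 hq).smul_left _).smul_right _]
  case d2c1 => rw [(X1_mul_X2_qCommute_Y1_add_Y2 hq).smul_left _]
  case d1c2 => rw [(X1_add_X2_qCommute_Y1_mul_Y2 hq).smul_right _]
  case d1c1 => exact X1_add_X2_mul_Y1_add_Y2_mul_eSym hq ht
  case d2r => rw [(X1_mul_X2_qCommute_rLift hq).smul_left _]
  case rc2 => rw [(rLift_qCommute_Y1_mul_Y2 hq).smul_right _]
  case d1r =>
    rw [X1_add_X2_mul_rLift_mul_eSym hq ht, mul_smul_comm, smul_smul]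
    field_simp
  case rc1 =>
    rw [rLift_mul_Y1_add_Y2_mul_eSym hq ht, smul_mul_assoc, smul_smul]
    field_simp
  case rr =>
    rw [rLift_mul_rLift_mul_eSym hq ht]
    simp only [smul_mul_assoc, mul_smul_comm, smul_smul]
    field_simp

variable (q) in
/-- The free lift of the Harish-Chandra homomorphism, before multiplication by `e`. -/
def hcLift (ht : t ≠ 0) (ht2 : t ^ 2 ≠ -1) :
    FB →ₐ[ℂ] cornerStabilizer ℂ (isIdempotentElem_eSym (q := q) ht ht2) :=
  FreeAlgebra.lift ℂ fun b ↦ ⟨hcGen q t b, hcGen_mem_cornerStabilizer ht ht2 b⟩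

theorem coe_hcLift (ht : t ≠ 0) (ht2 : t ^ 2 ≠ -1) (x : FB) :
    (hcLift q ht ht2 x : DAHA q t) = FreeAlgebra.lift ℂ (hcGen q t) x := by
  have h : (cornerStabilizer ℂ _).val.comp (hcLift q ht ht2) = FreeAlgebra.lift ℂ (hcGen q t) :=
    FreeAlgebra.hom_ext <| funext fun b ↦ by simp [hcLift]
  exact DFunLike.congr_fun h x

/-- The Harish-Chandra homomorphism, with values in the spherical DAHA. -/
def hc (hq : q ≠ 0) (ht : t ≠ 0) (ht2 : t ^ 2 ≠ -1) :
    AlgBt q t →ₐ[ℂ] (isIdempotentElem_eSym (q := q) ht ht2).Corner :=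
  RingQuot.liftAlgHom ℂ ⟨(toCorner _).comp (hcLift q ht ht2), fun x y h ↦ Subtype.ext <| by
    change (hcLift q ht ht2 x : DAHA q t) * 𝐞 = hcLift q ht ht2 y * 𝐞
    rw [coe_hcLift, coe_hcLift, lift_hcGen_mul_eSym hq ht h]⟩

/-- The Harish-Chandra homomorphism as a linear map into the DAHA. -/
def hcMap (hq : q ≠ 0) (ht : t ≠ 0) (ht2 : t ^ 2 ≠ -1) : AlgBt q t →ₗ[ℂ] DAHA q t :=
  cornerSubtype ℂ _ ∘ₗ (hc hq ht ht2).toLinearMap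

variable {hq : q ≠ 0} {ht : t ≠ 0} {ht2 : t ^ 2 ≠ -1}

theorem hcMap_mul (x y : AlgBt q t) :
    hcMap hq ht ht2 (x * y) = hcMap hq ht ht2 x * hcMap hq ht ht2 y :=
  congrArg (cornerSubtype ℂ _) (map_mul (hc hq ht ht2) x y)

theorem hcMap_one : hcMap hq ht ht2 1 = 𝐞 :=
  congrArg (cornerSubtype ℂ _) (map_one (hc hq ht ht2))

theorem hcMap_gB (b : BGen) :
    hcMap hq ht ht2 (RingQuot.mkAlgHom ℂ (BRel q t) (gB b)) = hcGen q t b * 𝐞 := by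
  have h : hcMap hq ht ht2 (RingQuot.mkAlgHom ℂ (BRel q t) (gB b)) = hcLift q ht ht2 (gB b) * 𝐞 :=
    congrArg (cornerSubtype ℂ _) (RingQuot.liftAlgHom_mkAlgHom_apply ..)
  rw [h, coe_hcLift, gB, FreeAlgebra.lift_ι_apply]

theorem hcMap_gB_eq_eSym_mul (b : BGen) :
    hcMap hq ht ht2 (RingQuot.mkAlgHom ℂ (BRel q t) (gB b)) = 𝐞 * hcGen q t b * 𝐞 :=
  (hcMap_gB b).trans (hcGen_mem_cornerStabilizer ht ht2 b).symm

theorem hcMap_c2 : hcMap hq ht ht2 (c2 q t) = q ^ 2 • (𝐞 * (Y₁ * Y₂) * 𝐞) := by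
  rw [c2, hcMap_gB_eq_eSym_mul, hcGen, mul_smul_comm, smul_mul_assoc]

theorem hcMap_d2 : hcMap hq ht ht2 (d2 q t) = q ^ 2 • (𝐞 * (X₁ * X₂) * 𝐞) := by
  rw [d2, hcMap_gB_eq_eSym_mul, hcGen, mul_smul_comm, smul_mul_assoc]

theorem hcMap_rr :
    hcMap hq ht ht2 (rr q t) = 𝐞 * (t⁻¹ ^ 2 • (Y₁ * X₁) + Y₂ * X₂) * 𝐞 := by
  rw [rr, hcMap_gB, eSym_mul_mul_eSym_eq_rLift_mul_eSym ht ht2]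
  rfl

end HarishChandra

/-! ### Surjectivity -/

section Spanning

open Algebra Submodule

variable (q t) in
/-- The Laurent polynomials in `X₁` and `X₂`, with `(X₁X₂)⁻¹` as the only inverse generator. -/
def laurentX : Submodule ℂ (DAHA q t) := (adjoin ℂ {X₁, X₂, X₁₂⁻¹}).toSubmodule

variable (q t) in
/-- The Laurent polynomials in `Y₁` and `Y₂`, with `(Y₁Y₂)⁻¹` as the only inverse generator. -/
def laurentY : Submodule ℂ (DAHA q t) := (adjoin ℂ {Y₁, Y₂, Y₁₂⁻¹}).toSubmodule

variable (q t) in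
/-- The finite Hecke algebra `ℂ + ℂT`. -/
def finiteHecke : Submodule ℂ (DAHA q t) := span ℂ {1, 𝐓}

local notation "𝓧" => laurentX q t
local notation "𝓨" => laurentY q t
local notation "𝓗" => finiteHecke q t

theorem one_mem_finiteHecke : 1 ∈ 𝓗 := subset_span (by simp)

theorem T_mem_finiteHecke : 𝐓 ∈ 𝓗 := subset_span (by simp)

theorem Ti_mem_finiteHecke (ht : t ≠ 0) : 𝐓⁻¹ ∈ 𝓗 :=
  Ti_eq ht ▸ sub_mem T_mem_finiteHecke (smul_mem _ _ one_mem_finiteHecke)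

theorem finiteHecke_mul_finiteHecke_le (ht : t ≠ 0) : 𝓗 * 𝓗 ≤ 𝓗 := by
  refine span_pair_mul_span_pair_le ?_ ?_ ?_ ?_
  · simpa only [one_mul] using one_mem_finiteHecke
  · simpa only [one_mul] using T_mem_finiteHecke
  · simpa only [mul_one] using T_mem_finiteHecke
  · rw [T_mul_T ht]
    exact add_mem one_mem_finiteHecke (smul_mem _ _ T_mem_finiteHecke)

variable (q t) in
/-- The linear span of `X₁` and `X₂`. -/
def linearX : Submodule ℂ (DAHA q t) := span ℂ {X₁, X₂}

variable (q t) in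
/-- The linear span of `Y₁` and `Y₂`. -/
def linearY : Submodule ℂ (DAHA q t) := span ℂ {Y₁, Y₂}

local notation "𝓛ₓ" => linearX q t
local notation "𝓛ᵧ" => linearY q t

theorem X1_mem_linearX : X₁ ∈ 𝓛ₓ := subset_span (by simp)

theorem X2_mem_linearX : X₂ ∈ 𝓛ₓ := subset_span (by simp)

theorem Y1_mem_linearY : Y₁ ∈ 𝓛ᵧ := subset_span (by simp)

theorem Y2_mem_linearY : Y₂ ∈ 𝓛ᵧ := subset_span (by simp)

theorem finiteHecke_mul_linearX_le (ht : t ≠ 0) : 𝓗 * 𝓛ₓ ≤ 𝓛ₓ * 𝓗 := by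
  have le : 𝓛ₓ ≤ 𝓛ₓ * 𝓗 := fun x hx ↦ mul_one x ▸ mul_mem_mul hx one_mem_finiteHecke
  have hTi := Ti_mem_finiteHecke (q := q) ht
  refine span_pair_mul_span_pair_le ?_ ?_ ?_ ?_
  · simpa only [one_mul] using le X1_mem_linearX
  · simpa only [one_mul] using le X2_mem_linearX
  · exact T_mul_X1 ▸ mul_mem_mul X2_mem_linearX hTi
  · rw [T_eq ht, add_mul, Ti_mul_X2 ht, smul_mul_assoc, one_mul]
    exact add_mem (add_mem (mul_mem_mul X1_mem_linearX hTi) (smul_mem _ _ (le X1_mem_linearX)))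
      (smul_mem _ _ (le X2_mem_linearX))

theorem finiteHecke_mul_linearY_le (ht : t ≠ 0) : 𝓗 * 𝓛ᵧ ≤ 𝓛ᵧ * 𝓗 := by
  have le : 𝓛ᵧ ≤ 𝓛ᵧ * 𝓗 := fun x hx ↦ mul_one x ▸ mul_mem_mul hx one_mem_finiteHecke
  refine span_pair_mul_span_pair_le ?_ ?_ ?_ ?_
  · simpa only [one_mul] using le Y1_mem_linearY
  · simpa only [one_mul] using le Y2_mem_linearY
  · rw [T_eq ht, add_mul, ← Y2_mul_T, smul_mul_assoc, one_mul]
    exact add_mem (mul_mem_mul Y2_mem_linearY T_mem_finiteHecke) (smul_mem _ _ (le Y1_mem_linearY))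
  · exact T_mul_Y2 ▸ mul_mem_mul Y1_mem_linearY (Ti_mem_finiteHecke ht)

theorem linearX_mul_linearY_le (hq : q ≠ 0) (ht : t ≠ 0) : 𝓛ₓ * 𝓛ᵧ ≤ 𝓛ᵧ * 𝓛ₓ * 𝓗 := by
  have le {x y : DAHA q t} (hy : y ∈ 𝓛ᵧ) (hx : x ∈ 𝓛ₓ) : y * x ∈ 𝓛ᵧ * 𝓛ₓ * 𝓗 :=
    mul_one (y * x) ▸ mul_mem_mul (mul_mem_mul hy hx) one_mem_finiteHecke
  have hYXTi : Y₂ * X₂ * 𝐓⁻¹ ∈ 𝓛ᵧ * 𝓛ₓ * 𝓗 :=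
    mul_mem_mul (mul_mem_mul Y2_mem_linearY X2_mem_linearX) (Ti_mem_finiteHecke ht)
  refine span_pair_mul_span_pair_le ?_ ?_ ?_ ?_
  · rw [X1_mul_Y1 hq ht]
    exact smul_mem _ _ (sub_mem (le Y1_mem_linearY X1_mem_linearX) (smul_mem _ _ hYXTi))
  · rw [X1_mul_Y2 ht]
    exact add_mem (le Y2_mem_linearY X1_mem_linearX) (smul_mem _ _ hYXTi)
  · rw [X2_mul_Y1 hq ht]
    exact add_mem (le Y1_mem_linearY X2_mem_linearX) (smul_mem _ _ hYXTi)
  · rw [X2_mul_Y2 hq ht]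
    exact smul_mem _ _ (sub_mem (le Y2_mem_linearY X2_mem_linearX) (smul_mem _ _ hYXTi))

theorem one_mem_laurentX : 1 ∈ 𝓧 := (adjoin ℂ _).one_mem

theorem one_mem_laurentY : 1 ∈ 𝓨 := (adjoin ℂ _).one_mem

theorem laurentX_mul_laurentX : 𝓧 * 𝓧 = 𝓧 := (adjoin ℂ _).isIdempotentElem_toSubmodule

theorem laurentY_mul_laurentY : 𝓨 * 𝓨 = 𝓨 := (adjoin ℂ _).isIdempotentElem_toSubmodule

theorem linearX_le_laurentX : 𝓛ₓ ≤ 𝓧 :=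
  span_le.2 <| Set.pair_subset (subset_adjoin (by simp)) (subset_adjoin (by simp))

theorem linearY_le_laurentY : 𝓛ᵧ ≤ 𝓨 :=
  span_le.2 <| Set.pair_subset (subset_adjoin (by simp)) (subset_adjoin (by simp))

theorem unitX_inv_mem_laurentX : X₁₂⁻¹ ∈ 𝓧 := subset_adjoin (by simp)

theorem unitY_inv_mem_laurentY : Y₁₂⁻¹ ∈ 𝓨 := subset_adjoin (by simp)

theorem finiteHecke_mul_laurentX_le (ht : t ≠ 0) : 𝓗 * 𝓧 ≤ 𝓧 * 𝓗 := by
  refine span_mul_adjoin_le ?_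
  have linear {h x : DAHA q t} (hh : h ∈ 𝓗) (hx : x ∈ 𝓛ₓ) : h * x ∈ 𝓧 * 𝓗 :=
    mul_le_mul_left linearX_le_laurentX _ (finiteHecke_mul_linearX_le ht (mul_mem_mul hh hx))
  rintro h hh _ (rfl | rfl | rfl)
  · exact linear (subset_span hh) X1_mem_linearX
  · exact linear (subset_span hh) X2_mem_linearX
  · have hT : Commute h X₁₂⁻¹ := by
      obtain rfl | rfl := hh
      exacts [Commute.one_left _, T_commute_unitX_inv]
    exact hT.eq ▸ mul_mem_mul unitX_inv_mem_laurentX (subset_span hh)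

theorem finiteHecke_mul_laurentY_le (ht : t ≠ 0) : 𝓗 * 𝓨 ≤ 𝓨 * 𝓗 := by
  refine span_mul_adjoin_le ?_
  have linear {h y : DAHA q t} (hh : h ∈ 𝓗) (hy : y ∈ 𝓛ᵧ) : h * y ∈ 𝓨 * 𝓗 :=
    mul_le_mul_left linearY_le_laurentY _ (finiteHecke_mul_linearY_le ht (mul_mem_mul hh hy))
  rintro h hh _ (rfl | rfl | rfl)
  · exact linear (subset_span hh) Y1_mem_linearY
  · exact linear (subset_span hh) Y2_mem_linearY
  · have hT : Commute h Y₁₂⁻¹ := by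
      obtain rfl | rfl := hh
      exacts [Commute.one_left _, T_commute_unitY_inv]
    exact hT.eq ▸ mul_mem_mul unitY_inv_mem_laurentY (subset_span hh)

theorem linearX_mul_finiteHecke_mul_laurentY_le (hq : q ≠ 0) (ht : t ≠ 0) :
    𝓛ₓ * 𝓗 * 𝓨 ≤ 𝓨 * (𝓛ₓ * 𝓗) := by
  have linear : 𝓛ₓ * 𝓗 * 𝓛ᵧ ≤ 𝓨 * (𝓛ₓ * 𝓗) := by
    calc 𝓛ₓ * 𝓗 * 𝓛ᵧ = 𝓛ₓ * (𝓗 * 𝓛ᵧ) := mul_assoc _ _ _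
      _ ≤ 𝓛ₓ * (𝓛ᵧ * 𝓗) := by gcongr 𝓛ₓ * ?_; exact finiteHecke_mul_linearY_le ht
      _ = 𝓛ₓ * 𝓛ᵧ * 𝓗 := (mul_assoc _ _ _).symm
      _ ≤ 𝓛ᵧ * 𝓛ₓ * 𝓗 * 𝓗 := by gcongr ?_ * 𝓗; exact linearX_mul_linearY_le hq ht
      _ = 𝓛ᵧ * (𝓛ₓ * (𝓗 * 𝓗)) := by simp only [mul_assoc]
      _ ≤ 𝓨 * (𝓛ₓ * 𝓗) := by
        gcongr
        exacts [linearY_le_laurentY, finiteHecke_mul_finiteHecke_le ht]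
  rw [linearX, finiteHecke, span_mul_span] at linear ⊢
  refine span_mul_adjoin_le ?_
  rintro v hv _ (rfl | rfl | rfl)
  · exact linear (mul_mem_mul (subset_span hv) Y1_mem_linearY)
  · exact linear (mul_mem_mul (subset_span hv) Y2_mem_linearY)
  · obtain ⟨x, hx, h, hh, rfl⟩ := id hv
    have hx' : QCommute (q⁻¹ ^ 2)⁻¹ x Y₁₂⁻¹ := by
      have hq2 : q⁻¹ ^ 2 ≠ 0 := pow_ne_zero 2 (inv_ne_zero hq)
      obtain rfl | rfl := hx
      exacts [(X1_qCommute_Y1_mul_Y2 hq).units_inv_right (u := unitY) hq2,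
        (X2_qCommute_Y1_mul_Y2 hq).units_inv_right (u := unitY) hq2]
    have hh' : QCommute (1 : ℂ) h Y₁₂⁻¹ := .of_commute <| by
      obtain rfl | rfl := hh
      exacts [Commute.one_left _, T_commute_unitY_inv]
    exact hx'.mul_left hh' ▸ smul_mem _ _ (mul_mem_mul unitY_inv_mem_laurentY (subset_span hv))

theorem unitX_inv_mul_laurentY_le (hq : q ≠ 0) : span ℂ {X₁₂⁻¹} * 𝓨 ≤ 𝓨 * span ℂ {X₁₂⁻¹} := by
  refine span_mul_adjoin_le ?_
  have of_qCommute {s : ℂ} {y : DAHA q t} (hs : s ≠ 0) (h : QCommute s (X₁ * X₂) y) (hy : y ∈ 𝓨) :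
      X₁₂⁻¹ * y ∈ 𝓨 * span ℂ {X₁₂⁻¹} :=
    h.units_inv_left (u := unitX) hs ▸ smul_mem _ _ (mul_mem_mul hy (mem_span_singleton_self _))
  have hq2 : q⁻¹ ^ 2 ≠ 0 := pow_ne_zero 2 (inv_ne_zero hq)
  have hq4 : q⁻¹ ^ 4 ≠ 0 := pow_ne_zero 4 (inv_ne_zero hq)
  rintro _ rfl _ (rfl | rfl | rfl)
  · exact of_qCommute hq2 (X1_mul_X2_qCommute_Y1 hq) (linearY_le_laurentY Y1_mem_linearY)
  · exact of_qCommute hq2 (X1_mul_X2_qCommute_Y2 hq) (linearY_le_laurentY Y2_mem_linearY)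
  · exact of_qCommute (inv_ne_zero hq4)
      ((X1_mul_X2_qCommute_Y1_mul_Y2 hq).units_inv_right (u := unitY) hq4) unitY_inv_mem_laurentY

theorem unitX2_mul_unitX1 : unitX2 * unitX1 = (unitX : (DAHA q t)ˣ) :=
  Units.ext X1_commute_X2.symm

theorem unitY2_mul_unitY1 : unitY2 * unitY1 = (unitY : (DAHA q t)ˣ) :=
  Units.ext Y1_commute_Y2.symm

theorem adjoin_T_X1_Y1_eq_top (ht : t ≠ 0) : adjoin ℂ {𝐓, X₁, Y₁, X₁₂⁻¹, Y₁₂⁻¹} = ⊤ := by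
  set S := adjoin ℂ {𝐓, X₁, Y₁, X₁₂⁻¹, Y₁₂⁻¹}
  have hT : 𝐓 ∈ S := subset_adjoin (by simp)
  have hX1 : X₁ ∈ S := subset_adjoin (by simp)
  have hY1 : Y₁ ∈ S := subset_adjoin (by simp)
  have hX : X₁₂⁻¹ ∈ S := subset_adjoin (by simp)
  have hY : Y₁₂⁻¹ ∈ S := subset_adjoin (by simp)
  have hTi : 𝐓⁻¹ ∈ S := Ti_eq ht ▸ sub_mem hT (S.smul_mem S.one_mem _)
  have hX2 : X₂ ∈ S := T_mul_X1_mul_T ▸ mul_mem (mul_mem hT hX1) hT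
  have hY2 : Y₂ ∈ S := Ti_mul_Y1_mul_Ti ▸ mul_mem (mul_mem hTi hY1) hTi
  have inv_mem {u v : (DAHA q t)ˣ} (hv : ↑v ∈ S) (huv : ↑(u * v)⁻¹ ∈ S) : ↑u⁻¹ ∈ S := by
    simpa using mul_mem hv huv
  rw [← top_le_iff, ← adjoin_range_mkAlgHom_ι (DRel q t), adjoin_le_iff]
  rintro _ ⟨g, rfl⟩
  cases g with
  | T => exact hT
  | Ti => exact hTi
  | X1 => exact hX1
  | X1i => exact inv_mem (u := unitX1) (v := unitX2) hX2 hX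
  | X2 => exact hX2
  | X2i => exact inv_mem (u := unitX2) (v := unitX1) hX1 (unitX2_mul_unitX1 ▸ hX)
  | Y1 => exact hY1
  | Y1i => exact inv_mem (u := unitY1) (v := unitY2) hY2 hY
  | Y2 => exact hY2
  | Y2i => exact inv_mem (u := unitY2) (v := unitY1) hY1 (unitY2_mul_unitY1 ▸ hY)

theorem finiteHecke_mul_le (ht : t ≠ 0) : 𝓗 * (𝓨 * 𝓧 * 𝓗) ≤ 𝓨 * 𝓧 * 𝓗 := by
  calc 𝓗 * (𝓨 * 𝓧 * 𝓗) = 𝓗 * 𝓨 * 𝓧 * 𝓗 := by simp only [mul_assoc]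
    _ ≤ 𝓨 * 𝓗 * 𝓧 * 𝓗 := by gcongr ?_ * 𝓧 * 𝓗; exact finiteHecke_mul_laurentY_le ht
    _ = 𝓨 * (𝓗 * 𝓧) * 𝓗 := by simp only [mul_assoc]
    _ ≤ 𝓨 * (𝓧 * 𝓗) * 𝓗 := by gcongr 𝓨 * ?_ * 𝓗; exact finiteHecke_mul_laurentX_le ht
    _ = 𝓨 * 𝓧 * (𝓗 * 𝓗) := by simp only [mul_assoc]
    _ ≤ 𝓨 * 𝓧 * 𝓗 := by gcongr; exact finiteHecke_mul_finiteHecke_le ht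

theorem linearX_mul_le (hq : q ≠ 0) (ht : t ≠ 0) : 𝓛ₓ * (𝓨 * 𝓧 * 𝓗) ≤ 𝓨 * 𝓧 * 𝓗 := by
  calc 𝓛ₓ * (𝓨 * 𝓧 * 𝓗) = 𝓛ₓ * 1 * 𝓨 * 𝓧 * 𝓗 := by simp only [mul_assoc, one_mul]
    _ ≤ 𝓛ₓ * 𝓗 * 𝓨 * 𝓧 * 𝓗 := by gcongr; exact one_le.2 one_mem_finiteHecke
    _ ≤ 𝓨 * (𝓛ₓ * 𝓗) * 𝓧 * 𝓗 := by
      gcongr ?_ * 𝓧 * 𝓗; exact linearX_mul_finiteHecke_mul_laurentY_le hq ht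
    _ = 𝓨 * 𝓛ₓ * (𝓗 * 𝓧) * 𝓗 := by simp only [mul_assoc]
    _ ≤ 𝓨 * 𝓧 * (𝓧 * 𝓗) * 𝓗 := by
      gcongr 𝓨 * ?_ * ?_ * 𝓗
      exacts [linearX_le_laurentX, finiteHecke_mul_laurentX_le ht]
    _ = 𝓨 * (𝓧 * 𝓧) * (𝓗 * 𝓗) := by simp only [mul_assoc]
    _ ≤ 𝓨 * 𝓧 * 𝓗 := by
      rw [laurentX_mul_laurentX]; gcongr; exact finiteHecke_mul_finiteHecke_le ht

theorem unitX_inv_mul_le (hq : q ≠ 0) :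
    span ℂ {X₁₂⁻¹} * (𝓨 * 𝓧 * 𝓗) ≤ 𝓨 * 𝓧 * 𝓗 := by
  calc span ℂ {X₁₂⁻¹} * (𝓨 * 𝓧 * 𝓗) = span ℂ {X₁₂⁻¹} * 𝓨 * 𝓧 * 𝓗 := by simp only [mul_assoc]
    _ ≤ 𝓨 * span ℂ {X₁₂⁻¹} * 𝓧 * 𝓗 := by gcongr ?_ * 𝓧 * 𝓗; exact unitX_inv_mul_laurentY_le hq
    _ ≤ 𝓨 * 𝓧 * 𝓧 * 𝓗 := by
      gcongr; exact (span_singleton_le_iff_mem ..).2 unitX_inv_mem_laurentX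
    _ = 𝓨 * 𝓧 * 𝓗 := by rw [mul_assoc 𝓨, laurentX_mul_laurentX]

/-- The spanning half of the PBW theorem for the DAHA. -/
theorem laurentY_mul_laurentX_mul_finiteHecke (hq : q ≠ 0) (ht : t ≠ 0) : 𝓨 * 𝓧 * 𝓗 = ⊤ := by
  have hY : 𝓨 * (𝓨 * 𝓧 * 𝓗) = 𝓨 * 𝓧 * 𝓗 := by
    rw [mul_assoc 𝓨, ← mul_assoc 𝓨 𝓨, laurentY_mul_laurentY]
  rw [← top_le_iff, ← Algebra.top_toSubmodule, ← adjoin_T_X1_Y1_eq_top ht]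
  refine adjoin_le_of_mul_mem ?_ ?_
  · simpa only [one_mul] using
      mul_mem_mul (mul_mem_mul one_mem_laurentY one_mem_laurentX) one_mem_finiteHecke
  · rintro _ (rfl | rfl | rfl | rfl | rfl) x hx
    · exact finiteHecke_mul_le ht (mul_mem_mul T_mem_finiteHecke hx)
    · exact linearX_mul_le hq ht (mul_mem_mul X1_mem_linearX hx)
    · exact hY.le (mul_mem_mul (linearY_le_laurentY Y1_mem_linearY) hx)
    · exact unitX_inv_mul_le hq (mul_mem_mul (mem_span_singleton_self _) hx)
    · exact hY.le (mul_mem_mul unitY_inv_mem_laurentY hx)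

end Spanning

section Surjectivity

open Algebra Submodule

local notation "𝓧" => laurentX q t
local notation "𝓨" => laurentY q t
local notation "𝓗" => finiteHecke q t

theorem eSym_mul_T (ht : t ≠ 0) : 𝐞 * 𝐓 = t • 𝐞 := by
  rw [(eSym_commute (Commute.refl 𝐓)).eq, T_mul_eSym ht]

theorem eSym_mul_X2_mul_eSym (ht : t ≠ 0) : 𝐞 * X₂ * 𝐞 = t ^ 2 • (𝐞 * X₁ * 𝐞) := by
  rw [← T_mul_X1_mul_T, ← mul_assoc, ← mul_assoc, eSym_mul_T ht, mul_assoc _ 𝐓, T_mul_eSym ht]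
  simp only [smul_mul_assoc, mul_smul_comm, smul_smul, pow_two]

theorem eSym_mul_Y1_mul_eSym (ht : t ≠ 0) : 𝐞 * Y₁ * 𝐞 = t ^ 2 • (𝐞 * Y₂ * 𝐞) := by
  rw [Y1_eq, ← mul_assoc, ← mul_assoc, eSym_mul_T ht, mul_assoc _ 𝐓, T_mul_eSym ht]
  simp only [smul_mul_assoc, mul_smul_comm, smul_smul, pow_two]

theorem eSym_mul_Y2_mul_X2_mul_eSym (ht : t ≠ 0) : 𝐞 * (Y₂ * X₂) * 𝐞 = 𝐞 * (Y₁ * X₁) * 𝐞 := by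
  have h : t • (𝐞 * (Y₂ * X₂) * 𝐞) = t • (𝐞 * (Y₁ * X₁) * 𝐞) := by
    calc t • (𝐞 * (Y₂ * X₂) * 𝐞) = 𝐞 * (𝐓 * (Y₂ * X₂)) * 𝐞 := by
          rw [← mul_assoc 𝐞 𝐓, eSym_mul_T ht, smul_mul_assoc, smul_mul_assoc]
      _ = t • (𝐞 * (Y₁ * X₁) * 𝐞) := by
          rw [T_mul_Y2_mul_X2, ← mul_assoc, mul_assoc _ 𝐓, T_mul_eSym ht, mul_smul_comm]
  exact smul_right_injective _ ht h

/-- The image of the Harish-Chandra homomorphism, as a subspace of the DAHA. -/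
def hcRange (hq : q ≠ 0) (ht : t ≠ 0) (ht2 : t ^ 2 ≠ -1) : Submodule ℂ (DAHA q t) :=
  LinearMap.range (hcMap hq ht ht2)

variable {hq : q ≠ 0} {ht : t ≠ 0} {ht2 : t ^ 2 ≠ -1}

theorem mul_mem_hcRange {x y : DAHA q t} (hx : x ∈ hcRange hq ht ht2)
    (hy : y ∈ hcRange hq ht ht2) : x * y ∈ hcRange hq ht ht2 := by
  obtain ⟨a, rfl⟩ := hx
  obtain ⟨b, rfl⟩ := hy
  exact ⟨a * b, hcMap_mul a b⟩

theorem eSym_mem_hcRange : 𝐞 ∈ hcRange hq ht ht2 :=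
  ⟨1, hcMap_one⟩

theorem hcGen_mul_eSym_mem_hcRange (b : BGen) : hcGen q t b * 𝐞 ∈ hcRange hq ht ht2 :=
  ⟨_, hcMap_gB b⟩

variable (q t) in
/-- The symmetric Laurent polynomials in `X₁` and `X₂`. -/
def symmetricX : Subalgebra ℂ (DAHA q t) := adjoin ℂ {X₁ + X₂, X₁ * X₂, X₁₂⁻¹}

variable (q t) in
/-- The symmetric Laurent polynomials in `Y₁` and `Y₂`. -/
def symmetricY : Subalgebra ℂ (DAHA q t) := adjoin ℂ {Y₁ + Y₂, Y₁ * Y₂, Y₁₂⁻¹}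

local notation "𝓧ˢ" => symmetricX q t
local notation "𝓨ˢ" => symmetricY q t

theorem laurentY_le : 𝓨 ≤ (𝓨ˢ).toSubmodule * span ℂ {1, Y₁} :=
  adjoin_triple_le_of_commute Y1_commute_Y2 (Y1_mul_Y2_commute_Y1.symm.units_inv_right (u := unitY))

theorem laurentX_le : 𝓧 ≤ span ℂ {1, X₁} * (𝓧ˢ).toSubmodule :=
  adjoin_triple_le_of_commute' X1_commute_X2
    (X1_mul_X2_commute_X1.symm.units_inv_right (u := unitX))

theorem mem_hcRange_of_smul {x : DAHA q t} {r : ℂ} {b : BGen} (hr : r ≠ 0)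
    (h : r • x = hcGen q t b * 𝐞) : x ∈ hcRange hq ht ht2 :=
  (smul_mem_iff _ hr).1 (h ▸ hcGen_mul_eSym_mem_hcRange b)

theorem mem_symmetricX {x : DAHA q t} (hx : x ∈ 𝓧ˢ) : Commute 𝐞 x ∧ x * 𝐞 ∈ hcRange hq ht ht2 := by
  refine commute_and_mul_mem_of_mem_adjoin (isIdempotentElem_eSym ht ht2) eSym_mem_hcRange
    (fun x hx y hy ↦ mul_mem_hcRange hx hy) ?_ hx
  rintro _ (rfl | rfl | rfl)
  · exact ⟨eSym_commute (T_commute_X1_add_X2 ht), hcGen_mul_eSym_mem_hcRange .d1⟩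
  · exact ⟨eSym_commute T_commute_X1_mul_X2, mem_hcRange_of_smul (b := .d2)
      (pow_ne_zero 2 hq) (by simp [hcGen])⟩
  · exact ⟨eSym_commute T_commute_unitX_inv, mem_hcRange_of_smul (b := .d2i)
      (pow_ne_zero 2 (inv_ne_zero hq)) (by simp [hcGen])⟩

theorem mem_symmetricY {x : DAHA q t} (hx : x ∈ 𝓨ˢ) : Commute 𝐞 x ∧ x * 𝐞 ∈ hcRange hq ht ht2 := by
  refine commute_and_mul_mem_of_mem_adjoin (isIdempotentElem_eSym ht ht2) eSym_mem_hcRange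
    (fun x hx y hy ↦ mul_mem_hcRange hx hy) ?_ hx
  rintro _ (rfl | rfl | rfl)
  · exact ⟨eSym_commute (T_commute_Y1_add_Y2 ht), hcGen_mul_eSym_mem_hcRange .c1⟩
  · exact ⟨eSym_commute T_commute_Y1_mul_Y2, mem_hcRange_of_smul (b := .c2)
      (pow_ne_zero 2 hq) (by simp [hcGen])⟩
  · exact ⟨eSym_commute T_commute_unitY_inv, mem_hcRange_of_smul (b := .c2i)
      (pow_ne_zero 2 (inv_ne_zero hq)) (by simp [hcGen])⟩

theorem eSym_mul_mul_eSym_mem_hcRange {p : DAHA q t} (hp : p ∈ span ℂ {1, Y₁} * span ℂ {1, X₁}) :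
    𝐞 * p * 𝐞 ∈ hcRange hq ht ht2 := by
  have h := one_add_sq_ne_zero ht2
  have h' : 1 + t⁻¹ ^ 2 ≠ 0 := by
    field_simp
    exact div_ne_zero (by rwa [add_comm]) (pow_ne_zero 2 ht)
  have he := isIdempotentElem_eSym (q := q) ht ht2
  have h_gen (b : BGen) : 𝐞 * hcGen q t b * 𝐞 = hcGen q t b * 𝐞 :=
    hcGen_mem_cornerStabilizer ht ht2 b
  have hX : 𝐞 * X₁ * 𝐞 ∈ hcRange hq ht ht2 := mem_hcRange_of_smul (b := .d1) h <| by
    rw [← h_gen, hcGen, mul_add, add_mul, eSym_mul_X2_mul_eSym ht, add_smul, one_smul]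
  have hY : 𝐞 * Y₁ * 𝐞 ∈ hcRange hq ht ht2 := mem_hcRange_of_smul (b := .c1) h' <| by
    rw [← h_gen, hcGen, mul_add, add_mul, eSym_mul_Y1_mul_eSym ht]
    match_scalars
    field_simp
  have hYX : 𝐞 * (Y₁ * X₁) * 𝐞 ∈ hcRange hq ht ht2 := mem_hcRange_of_smul (b := .r) h' <| by
    rw [← h_gen, hcGen, rLift, mul_add, add_mul, mul_smul_comm, smul_mul_assoc,
      eSym_mul_Y2_mul_X2_mul_eSym ht, add_smul, one_smul]
  have le : span ℂ {1, Y₁} * span ℂ {1, X₁} ≤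
      (hcRange hq ht ht2).comap (LinearMap.mulRight ℂ 𝐞 ∘ₗ LinearMap.mulLeft ℂ 𝐞) := by
    refine span_pair_mul_span_pair_le ?_ ?_ ?_ ?_
    · simpa [he.eq] using eSym_mem_hcRange
    · simpa using hX
    · simpa using hY
    · simpa using hYX
  exact le hp

theorem exists_mul_eSym_eq_smul {h : DAHA q t} (ht : t ≠ 0) (hh : h ∈ 𝓗) :
    ∃ r : ℂ, h * 𝐞 = r • 𝐞 := by
  obtain ⟨r, r', rfl⟩ := mem_span_pair.1 hh
  exact ⟨r + r' * t, by
    rw [add_mul, smul_mul_assoc, smul_mul_assoc, one_mul, T_mul_eSym ht, smul_smul, add_smul]⟩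

theorem eSym_mul_prod_mul_eSym_mem_hcRange {u p v h : DAHA q t} (hu : u ∈ 𝓨ˢ)
    (hp : p ∈ span ℂ {1, Y₁} * span ℂ {1, X₁}) (hv : v ∈ 𝓧ˢ) (hh : h ∈ 𝓗) :
    𝐞 * (u * p * v * h) * 𝐞 ∈ hcRange hq ht ht2 := by
  obtain ⟨hu, hu_mem⟩ := mem_symmetricY (hq := hq) (ht := ht) (ht2 := ht2) hu
  obtain ⟨hv, hv_mem⟩ := mem_symmetricX (hq := hq) (ht := ht) (ht2 := ht2) hv
  obtain ⟨r, hr⟩ := exists_mul_eSym_eq_smul ht hh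
  have he : 𝐞 * 𝐞 = 𝐞 := isIdempotentElem_eSym ht ht2
  have h_eq : 𝐞 * (u * p * v * h) * 𝐞 = r • (u * 𝐞 * (𝐞 * p * 𝐞) * (v * 𝐞)) := by
    calc 𝐞 * (u * p * v * h) * 𝐞 = 𝐞 * u * p * v * (h * 𝐞) := by simp only [mul_assoc]
      _ = r • (u * 𝐞 * p * (v * 𝐞)) := by
          rw [hr, mul_smul_comm, hu.eq]
          simp only [mul_assoc]
      _ = r • (u * (𝐞 * 𝐞) * p * (𝐞 * 𝐞 * v)) := by rw [he, hv.eq]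
      _ = r • (u * 𝐞 * (𝐞 * p * 𝐞) * (v * 𝐞)) := by
          rw [← hv.eq]
          simp only [mul_assoc]
  rw [h_eq]
  exact smul_mem _ r (mul_mem_hcRange
    (mul_mem_hcRange hu_mem (eSym_mul_mul_eSym_mem_hcRange hp)) hv_mem)

theorem eSym_mul_mem_hcRange (x : DAHA q t) : 𝐞 * x * 𝐞 ∈ hcRange hq ht ht2 := by
  let N := (hcRange hq ht ht2).comap (LinearMap.mulRight ℂ 𝐞 ∘ₗ LinearMap.mulLeft ℂ 𝐞)
  have le : (𝓨ˢ).toSubmodule * (span ℂ {1, Y₁} * span ℂ {1, X₁}) * (𝓧ˢ).toSubmodule * 𝓗 ≤ N := by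
    refine mul_le.2 fun x hx h hh ↦ ?_
    refine mul_le (P := N.comap (LinearMap.mulRight ℂ h)).2 (fun y hy v hv ↦ ?_) hx
    exact mul_le (P := (N.comap (LinearMap.mulRight ℂ h)).comap (LinearMap.mulRight ℂ v)).2
      (fun u hu p hp ↦ eSym_mul_prod_mul_eSym_mem_hcRange hu hp hv hh) hy
  have top_le : (⊤ : Submodule ℂ (DAHA q t)) ≤ N := by
    calc ⊤ = 𝓨 * 𝓧 * 𝓗 := (laurentY_mul_laurentX_mul_finiteHecke hq ht).symm
      _ ≤ (𝓨ˢ).toSubmodule * span ℂ {1, Y₁} * (span ℂ {1, X₁} * (𝓧ˢ).toSubmodule) * 𝓗 := by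
          gcongr ?_ * ?_ * _
          exacts [laurentY_le, laurentX_le]
      _ = (𝓨ˢ).toSubmodule * (span ℂ {1, Y₁} * span ℂ {1, X₁}) * (𝓧ˢ).toSubmodule * 𝓗 := by
          simp only [mul_assoc]
      _ ≤ N := le
  exact top_le mem_top

end Surjectivity

end DAHA

/-! ### The representation by difference operators -/

section PiPresentation

/-- A representation in `E` of the presentation of the DAHA by `T`, `Y₁`, `Y₂` and the element
`π = T X₁`, from which `X₁ = T⁻¹ π` and `X₂ = π T` are recovered. -/
structure PiRep (q t : ℂ) (E : Type*) [Ring E] [Algebra ℂ E] where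
  T : E
  π : Eˣ
  Y₁ : Eˣ
  Y₂ : Eˣ
  T_mul_T : T * T = 1 + (t - t⁻¹) • T
  Y₁_mul_Y₂ : (Y₁ * Y₂ : E) = Y₂ * Y₁
  π_mul_Y₁ : (π * Y₁ : E) = q⁻¹ ^ 2 • (Y₂ * π : E)
  π_mul_Y₂ : (π * Y₂ : E) = Y₁ * π
  π_mul_π_mul_T : π * (π * T) = T * (π * π)
  T_mul_Y₂ : T * Y₂ = Y₁ * (T - (t - t⁻¹) • 1)

namespace PiRep

variable {E : Type*} [Ring E] [Algebra ℂ E] (P : PiRep q t E)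

/-- The image of `T⁻¹`. -/
def Ti : E := P.T - κ • 1

theorem T_mul_Ti : P.T * P.Ti = 1 := by
  rw [Ti, mul_sub, P.T_mul_T, mul_smul_comm, mul_one, add_sub_cancel_right]

theorem Ti_mul_T : P.Ti * P.T = 1 := by
  rw [Ti, sub_mul, P.T_mul_T, smul_mul_assoc, one_mul, add_sub_cancel_right]

theorem Y₁_mul_Ti : (P.Y₁ * P.Ti : E) = P.T * P.Y₂ := P.T_mul_Y₂.symm

theorem Ti_mul_π_mul_π_mul_T : P.Ti * P.π * (P.π * P.T) = P.π * P.π := by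
  rw [mul_assoc, P.π_mul_π_mul_T, ← mul_assoc, P.Ti_mul_T, one_mul]

theorem π_mul_π_mul_Y₁ : (P.π * (P.π * P.Y₁) : E) = q⁻¹ ^ 2 • (P.Y₁ * (P.π * P.π) : E) := by
  rw [P.π_mul_Y₁, mul_smul_comm, ← mul_assoc, P.π_mul_Y₂, mul_assoc]

theorem π_inv_mul_Y₁ : (P.π⁻¹.1 * P.Y₁ : E) = P.Y₂ * P.π⁻¹.1 := by
  rw [Units.inv_mul_eq_iff_eq_mul, ← mul_assoc, P.π_mul_Y₂, Units.mul_inv_cancel_right]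

/-- The images of the generators of the DAHA. -/
def gen : DGen → E
  | .T => P.T
  | .Ti => P.Ti
  | .X1 => P.Ti * P.π
  | .X1i => P.π⁻¹.1 * P.T
  | .X2 => P.π * P.T
  | .X2i => P.Ti * P.π⁻¹.1
  | .Y1 => P.Y₁
  | .Y1i => P.Y₁⁻¹.1
  | .Y2 => P.Y₂
  | .Y2i => P.Y₂⁻¹.1

theorem lift_gen_eq (hq : q ≠ 0) (ht : t ≠ 0) {a b : FD} (h : DRel q t a b) :
    FreeAlgebra.lift ℂ P.gen a = FreeAlgebra.lift ℂ P.gen b := by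
  cases h <;> simp only [gD, map_mul, map_add, map_sub, map_smul, map_one, map_zero,
    AlgHom.commutes, FreeAlgebra.lift_ι_apply, gen, Units.mul_inv, Units.inv_mul]
  case TTi => exact P.T_mul_Ti
  case TiT => exact P.Ti_mul_T
  case X1X1i => rw [mul_assoc, Units.mul_inv_cancel_left, P.Ti_mul_T]
  case X1iX1 => rw [mul_assoc, mul_mul_of_mul_eq P.T_mul_Ti, one_mul, Units.inv_mul]
  case X2X2i => rw [mul_assoc, mul_mul_of_mul_eq P.T_mul_Ti, one_mul, Units.mul_inv]
  case X2iX2 => rw [mul_assoc, Units.inv_mul_cancel_left, P.Ti_mul_T]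
  case TX1T => rw [← mul_assoc, P.T_mul_Ti, one_mul]
  case TiY1Ti => rw [mul_assoc, P.Y₁_mul_Ti, ← mul_assoc, P.Ti_mul_T, one_mul]
  case Xcomm =>
    rw [P.Ti_mul_π_mul_π_mul_T, mul_assoc, mul_mul_of_mul_eq P.T_mul_Ti, one_mul]
  case Ycomm => exact P.Y₁_mul_Y₂
  case YXX =>
    rw [P.Ti_mul_π_mul_π_mul_T, mul_assoc, P.π_mul_π_mul_Y₁, smul_smul, ← mul_pow,
      mul_inv_cancel₀ hq, one_pow, one_smul]
  case X1iY2 =>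
    rw [mul_assoc, ← P.Y₁_mul_Ti, mul_mul_of_mul_eq P.π_inv_mul_Y₁]
    simp only [mul_assoc, mul_mul_of_mul_eq P.T_mul_Ti, one_mul]
  case hecke =>
    rw [mul_sub, add_mul, add_mul, P.T_mul_T]
    simp only [Algebra.algebraMap_eq_smul_one, smul_mul_assoc, mul_smul_comm, one_mul, mul_one]
    match_scalars <;> field_simp <;> ring

/-- The homomorphism from the DAHA determined by a `PiRep`. -/
def toAlgHom (hq : q ≠ 0) (ht : t ≠ 0) : DAHA q t →ₐ[ℂ] E :=
  RingQuot.liftAlgHom ℂ ⟨FreeAlgebra.lift ℂ P.gen, fun _ _ ↦ P.lift_gen_eq hq ht⟩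

theorem toAlgHom_mkAlgHom_gD (hq : q ≠ 0) (ht : t ≠ 0) (g : DGen) :
    P.toAlgHom hq ht (RingQuot.mkAlgHom ℂ (DRel q t) (gD g)) = P.gen g :=
  (RingQuot.liftAlgHom_mkAlgHom_apply ..).trans (FreeAlgebra.lift_ι_apply ..)

end PiRep

end PiPresentation

section Cherednik

/-- Two algebraically independent elements `y₁`, `y₂` of a field, with automorphisms `s` and `w`
lifting the action of the extended affine symmetric group of `GL₂`: `s` exchanges `y₁` and `y₂`,
and `w` is `s` after `y₁ ↦ q⁻² y₁`. -/
structure CherednikDatum (q : ℂ) (K : Type*) [Field K] [Algebra ℂ K] where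
  s : K ≃ₐ[ℂ] K
  w : K ≃ₐ[ℂ] K
  y₁ : K
  y₂ : K
  s_s (x : K) : s (s x) = x
  s_w_w (x : K) : s (w (w x)) = w (w (s x))
  s_y₁ : s y₁ = y₂
  w_y₁ : w y₁ = q⁻¹ ^ 2 • y₂
  w_y₂ : w y₂ = y₁
  algebraicIndependent : AlgebraicIndependent ℂ ![y₁, y₂]

namespace CherednikDatum

variable {K : Type*} [Field K] [Algebra ℂ K] (D : CherednikDatum q K)

theorem s_y₂ : D.s D.y₂ = D.y₁ := by rw [← D.s_y₁, D.s_s]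

theorem linearIndependent : LinearIndependent ℂ ![D.y₁, D.y₂] :=
  D.algebraicIndependent.linearIndependent

theorem y₁_ne_zero : D.y₁ ≠ 0 := D.linearIndependent.ne_zero 0

theorem y₂_ne_zero : D.y₂ ≠ 0 := D.linearIndependent.ne_zero 1

theorem y₁_sub_y₂_ne_zero : D.y₁ - D.y₂ ≠ 0 :=
  sub_ne_zero.2 fun h ↦ zero_ne_one (D.linearIndependent.injective h)

variable (t)

/-- The coefficient of the identity in the Demazure-Lusztig operator. -/
def α : K := κ • D.y₁ / (D.y₁ - D.y₂)

/-- The coefficient of `s` in the Demazure-Lusztig operator. -/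
def β : K := (t⁻¹ • D.y₁ - t • D.y₂) / (D.y₁ - D.y₂)

variable {t}

theorem β_ne_zero (ht : t ≠ 0) : D.β t ≠ 0 := by
  refine div_ne_zero (fun h ↦ ht ?_) D.y₁_sub_y₂_ne_zero
  have h0 := LinearIndependent.pair_iff.1 D.linearIndependent t⁻¹ (-t)
    (by rw [neg_smul, ← sub_eq_add_neg, h])
  exact neg_eq_zero.1 h0.2

theorem α_add_β : D.α t + D.β t = algebraMap ℂ K t := by
  have h := D.y₁_sub_y₂_ne_zero
  simp only [α, β, Algebra.smul_def, map_sub]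
  field_simp
  ring

theorem α_add_s_α : D.α t + D.s (D.α t) = algebraMap ℂ K κ := by
  have h := D.y₁_sub_y₂_ne_zero
  have h' : D.y₂ - D.y₁ ≠ 0 := by rwa [← neg_sub, neg_ne_zero]
  simp only [α, map_div₀, map_mul, map_sub, AlgEquiv.commutes, D.s_y₁, D.s_y₂, Algebra.smul_def]
  field_simp
  ring

theorem α_mul_α_add_β_mul_s_β (ht : t ≠ 0) :
    D.α t * D.α t + D.β t * D.s (D.β t) = 1 + algebraMap ℂ K κ * D.α t := by
  have h := D.y₁_sub_y₂_ne_zero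
  have h' : D.y₂ - D.y₁ ≠ 0 := by rwa [← neg_sub, neg_ne_zero]
  have hu : algebraMap ℂ K t * algebraMap ℂ K t⁻¹ = 1 := by
    rw [← map_mul, mul_inv_cancel₀ ht, map_one]
  simp only [α, β, map_div₀, map_mul, map_sub, AlgEquiv.commutes, D.s_y₁, D.s_y₂, Algebra.smul_def]
  generalize algebraMap ℂ K t = a at *
  generalize algebraMap ℂ K t⁻¹ = b at *
  field_simp
  linear_combination -(D.y₁ - D.y₂) ^ 3 * hu

theorem α_mul_y₂ : D.α t * D.y₂ = D.y₁ * (D.α t - algebraMap ℂ K κ) := by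
  have h := D.y₁_sub_y₂_ne_zero
  simp only [α, Algebra.smul_def, map_sub]
  field_simp
  ring

theorem w_w_y₁ : D.w (D.w D.y₁) = q⁻¹ ^ 2 • D.y₁ := by
  rw [D.w_y₁, map_smul, D.w_y₂]

theorem w_w_y₂ : D.w (D.w D.y₂) = q⁻¹ ^ 2 • D.y₂ := by
  rw [D.w_y₂, D.w_y₁]

theorem w_w_α (hq : q ≠ 0) : D.w (D.w (D.α t)) = D.α t := by
  simp only [α, map_div₀, map_smul, map_sub, w_w_y₁, w_w_y₂]
  rw [smul_comm, ← smul_sub, smul_div_smul_cancel (pow_ne_zero 2 (inv_ne_zero hq))]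

theorem w_w_β (hq : q ≠ 0) : D.w (D.w (D.β t)) = D.β t := by
  simp only [β, map_div₀, map_smul, map_sub, w_w_y₁, w_w_y₂, smul_comm _ (q⁻¹ ^ 2)]
  rw [← smul_sub, ← smul_sub, smul_div_smul_cancel (pow_ne_zero 2 (inv_ne_zero hq))]

variable (t) in
/-- The Demazure-Lusztig operator `α + β s`, where `s` also exchanges the two arguments. -/
def demazureLusztig : Module.End ℂ (ℤ × ℤ → K) :=
  Algebra.lsmul ℂ ℂ _ (D.α t) +
    Algebra.lsmul ℂ ℂ _ (D.β t) * (twistedShift D.s (Equiv.prodComm ℤ ℤ)).1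

theorem demazureLusztig_apply (F : ℤ × ℤ → K) (p : ℤ × ℤ) :
    D.demazureLusztig t F p = D.α t * F p + D.β t * D.s (F p.swap) :=
  rfl

/-- The operator by which `π` acts: `w` after the shift by `x₁` and the exchange of arguments. -/
def piShift : (Module.End ℂ (ℤ × ℤ → K))ˣ :=
  twistedShift D.w ((Equiv.prodComm ℤ ℤ).trans ((Equiv.subRight 1).prodCongr (Equiv.refl ℤ)))

theorem piShift_apply (F : ℤ × ℤ → K) (i j : ℤ) :
    (D.piShift : Module.End ℂ (ℤ × ℤ → K)) F (i, j) = D.w (F (j - 1, i)) :=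
  rfl

/-- Multiplication by a nonzero element of `K`, as a unit of the endomorphism ring. -/
def mulUnit (y : K) (hy : y ≠ 0) : (Module.End ℂ (ℤ × ℤ → K))ˣ :=
  Units.map (Algebra.lsmul ℂ ℂ (ℤ × ℤ → K)).toMonoidHom (Units.mk0 y hy)

theorem mulUnit_apply {y : K} (hy : y ≠ 0) (F : ℤ × ℤ → K) (p : ℤ × ℤ) :
    (mulUnit y hy : Module.End ℂ (ℤ × ℤ → K)) F p = y * F p :=
  rfl

/-- The representation of the DAHA by difference operators: a function `F : ℤ × ℤ → K` stands for
`∑ F(i, j) x₁ⁱ x₂ʲ`, where the `xᵢ` are the `q`-shifts of the `yᵢ`. -/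
def piRep (hq : q ≠ 0) (ht : t ≠ 0) : PiRep q t (Module.End ℂ (ℤ × ℤ → K)) where
  T := D.demazureLusztig t
  π := D.piShift
  Y₁ := mulUnit D.y₁ D.y₁_ne_zero
  Y₂ := mulUnit D.y₂ D.y₂_ne_zero
  T_mul_T := by
    ext F p : 2
    simp only [Module.End.mul_apply, demazureLusztig_apply, LinearMap.add_apply, Pi.add_apply,
      Module.End.one_apply, LinearMap.smul_apply, Pi.smul_apply, Algebra.smul_def (A := K), map_add,
      map_mul, D.s_s, Prod.swap_swap]
    linear_combination F p * D.α_mul_α_add_β_mul_s_β ht +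
      D.β t * D.s (F p.swap) * D.α_add_s_α (t := t)
  Y₁_mul_Y₂ := by
    ext F p : 2
    simp only [Module.End.mul_apply, mulUnit_apply, mul_left_comm]
  π_mul_Y₁ := by
    ext F ⟨i, j⟩ : 2
    simp only [Module.End.mul_apply, LinearMap.smul_apply, Pi.smul_apply, piShift_apply,
      mulUnit_apply, map_mul, D.w_y₁, smul_mul_assoc]
  π_mul_Y₂ := by
    ext F ⟨i, j⟩ : 2
    simp only [Module.End.mul_apply, piShift_apply, mulUnit_apply, map_mul, D.w_y₂]
  π_mul_π_mul_T := by
    ext F ⟨i, j⟩ : 2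
    simp only [Module.End.mul_apply, piShift_apply, demazureLusztig_apply, map_add, map_mul,
      D.w_w_α hq, D.w_w_β hq, D.s_w_w, Prod.swap_prod_mk]
  T_mul_Y₂ := by
    ext F p : 2
    simp only [Module.End.mul_apply, demazureLusztig_apply, mulUnit_apply, LinearMap.sub_apply,
      Pi.sub_apply, LinearMap.smul_apply, Pi.smul_apply, Module.End.one_apply,
      Algebra.smul_def (A := K), map_mul, D.s_y₂]
    linear_combination F p * D.α_mul_y₂ (t := t)

end CherednikDatum

end Cherednik

/-! ### Injectivity -/

section LeadingTerm

/-- The exponents of the monomials in `(x₁x₂)ⁿ` times a form of degree `k`. -/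
def exponents (k : ℕ) (n : ℤ) : Set (ℤ × ℤ) := {p | n ≤ p.1 ∧ n ≤ p.2 ∧ p.1 + p.2 = k + 2 * n}

theorem mem_exponents {k : ℕ} {n i j : ℤ} :
    (i, j) ∈ exponents k n ↔ n ≤ i ∧ n ≤ j ∧ i + j = k + 2 * n :=
  Iff.rfl

theorem eq_zero_of_notMem_exponents {M : Type*} [Zero M] {F : ℤ × ℤ → M} {k : ℕ} {n : ℤ}
    (hF : F.support ⊆ exponents k n) {i j : ℤ} (h : ¬(n ≤ i ∧ n ≤ j ∧ i + j = k + 2 * n)) :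
    F (i, j) = 0 :=
  Function.notMem_support.1 fun h0 ↦ h (hF h0)

/-- `F`, as a function of exponents, is `(x₁x₂)ⁿ` times a form of degree `k` in which `x₁ᵏ` has a
nonzero coefficient. -/
structure IsLeading {M : Type*} [Zero M] (F : ℤ × ℤ → M) (k : ℕ) (n : ℤ) : Prop where
  support_subset : F.support ⊆ exponents k n
  ne_zero : F (k + n, n) ≠ 0

theorem isLeading_single {M : Type*} [MulZeroOneClass M] [Nontrivial M] :
    IsLeading (Pi.single 0 1 : ℤ × ℤ → M) 0 0 where
  support_subset := by
    rintro p hp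
    obtain rfl := Pi.support_single_subset hp
    exact mem_exponents.2 (by simp)
  ne_zero := by simp [← Prod.zero_eq_mk]

namespace CherednikDatum

open DAHA

variable {K : Type*} [Field K] [Algebra ℂ K] (D : CherednikDatum q K)
  (hq : q ≠ 0) (ht : t ≠ 0) (ht2 : t ^ 2 ≠ -1)

/-- The representation of the DAHA given by `piRep`. -/
def rep : DAHA q t →ₐ[ℂ] Module.End ℂ (ℤ × ℤ → K) := (D.piRep hq ht).toAlgHom hq ht

theorem rep_T : D.rep hq ht (T q t) = D.demazureLusztig t := PiRep.toAlgHom_mkAlgHom_gD ..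

theorem rep_Y1 : D.rep hq ht (Y1 q t) = mulUnit D.y₁ D.y₁_ne_zero := PiRep.toAlgHom_mkAlgHom_gD ..

theorem rep_Y2 : D.rep hq ht (Y2 q t) = mulUnit D.y₂ D.y₂_ne_zero := PiRep.toAlgHom_mkAlgHom_gD ..

theorem rep_X1 : D.rep hq ht (X1 q t) = (D.piRep hq ht).Ti * (D.piRep hq ht).π :=
  PiRep.toAlgHom_mkAlgHom_gD ..

theorem rep_X2 : D.rep hq ht (X2 q t) = (D.piRep hq ht).π * (D.piRep hq ht).T :=
  PiRep.toAlgHom_mkAlgHom_gD ..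

theorem rep_X1_apply (F : ℤ × ℤ → K) (i j : ℤ) : D.rep hq ht (X1 q t) F (i, j) =
    D.α t * D.w (F (j - 1, i)) + D.β t * D.s (D.w (F (i - 1, j))) - κ • D.w (F (j - 1, i)) := by
  rw [rep_X1]
  rfl

theorem rep_X2_apply (F : ℤ × ℤ → K) (i j : ℤ) : D.rep hq ht (X2 q t) F (i, j) =
    D.w (D.α t * F (j - 1, i) + D.β t * D.s (F (i, j - 1))) := by
  rw [rep_X2]
  rfl

theorem rep_X1_mul_X2_apply (F : ℤ × ℤ → K) (i j : ℤ) :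
    D.rep hq ht (X1 q t * X2 q t) F (i, j) = D.w (D.w (F (i - 1, j - 1))) := by
  rw [map_mul, rep_X1, rep_X2, PiRep.Ti_mul_π_mul_π_mul_T]
  rfl

include ht2 in
theorem rep_eSym_single : D.rep hq ht 𝐞 (Pi.single 0 1) = Pi.single 0 1 := by
  have h_T : D.demazureLusztig t (Pi.single 0 1) = t • Pi.single 0 1 := by
    ext p
    rw [demazureLusztig_apply, Pi.smul_apply, Algebra.smul_def, ← D.α_add_β (t := t)]
    obtain rfl | hp := eq_or_ne p 0
    · simp
    · simp [hp, Prod.swap_eq_iff_eq_swap]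
  rw [eSym, map_smul, map_add, map_one, map_smul, rep_T, LinearMap.smul_apply, LinearMap.add_apply,
    LinearMap.smul_apply, Module.End.one_apply, h_T, inv_smul_eq_iff₀ (one_add_sq_ne_zero ht2)]
  module

variable {D hq ht} {F : ℤ × ℤ → K} {k : ℕ} {n : ℤ}

theorem support_rep_X1_subset (hF : F.support ⊆ exponents k n) :
    (D.rep hq ht (X1 q t) F).support ⊆ exponents (k + 1) n := by
  refine Function.support_subset_iff'.2 fun ⟨i, j⟩ h ↦ ?_
  rw [mem_exponents, Nat.cast_succ] at h
  rw [rep_X1_apply, eq_zero_of_notMem_exponents hF (by omega),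
    eq_zero_of_notMem_exponents hF (by omega)]
  simp only [map_zero, mul_zero, smul_zero, add_zero, sub_zero]

theorem support_rep_X2_subset (hF : F.support ⊆ exponents k n) :
    (D.rep hq ht (X2 q t) F).support ⊆ exponents (k + 1) n := by
  refine Function.support_subset_iff'.2 fun ⟨i, j⟩ h ↦ ?_
  rw [mem_exponents, Nat.cast_succ] at h
  rw [rep_X2_apply, eq_zero_of_notMem_exponents hF (by omega),
    eq_zero_of_notMem_exponents hF (by omega)]
  simp only [map_zero, mul_zero, add_zero]

theorem rep_X1_apply_top (hF : F.support ⊆ exponents k n) :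
    D.rep hq ht (X1 q t) F (k + 1 + n, n) = D.β t * D.s (D.w (F (k + n, n))) := by
  rw [rep_X1_apply, eq_zero_of_notMem_exponents hF (i := n - 1) (by omega), add_right_comm,
    add_sub_cancel_right]
  simp only [map_zero, mul_zero, smul_zero, zero_add, sub_zero]

theorem rep_X2_apply_top (hF : F.support ⊆ exponents k n) :
    D.rep hq ht (X2 q t) F (k + 1 + n, n) = 0 := by
  rw [rep_X2_apply, eq_zero_of_notMem_exponents hF (by omega),
    eq_zero_of_notMem_exponents hF (by omega)]
  simp only [map_zero, mul_zero, add_zero]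

theorem rep_X1_add_X2_apply_top (hF : F.support ⊆ exponents k n) :
    D.rep hq ht (X1 q t + X2 q t) F (k + 1 + n, n) = D.β t * D.s (D.w (F (k + n, n))) := by
  rw [map_add, LinearMap.add_apply, Pi.add_apply, rep_X1_apply_top hF, rep_X2_apply_top hF,
    add_zero]

theorem rep_rLift_apply (F : ℤ × ℤ → K) (p : ℤ × ℤ) :
    D.rep hq ht (rLift q t) F p =
      D.y₁ * D.rep hq ht (X1 q t) F p + t⁻¹ ^ 2 • (D.y₂ * D.rep hq ht (X2 q t) F p) := by
  rw [rLift, map_add, map_smul, map_mul, map_mul, rep_Y1, rep_Y2]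
  rfl

theorem rep_rLift_apply_top (hF : F.support ⊆ exponents k n) :
    D.rep hq ht (rLift q t) F (k + 1 + n, n) =
      D.y₁ * D.rep hq ht (X1 q t + X2 q t) F (k + 1 + n, n) := by
  rw [rep_rLift_apply, rep_X1_apply_top hF, rep_X2_apply_top hF, rep_X1_add_X2_apply_top hF,
    mul_zero, smul_zero, add_zero]

theorem support_rep_rLift_subset (hF : F.support ⊆ exponents k n) :
    (D.rep hq ht (rLift q t) F).support ⊆ exponents (k + 1) n := by
  refine Function.support_subset_iff'.2 fun ⟨i, j⟩ h ↦ ?_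
  rw [rep_rLift_apply, eq_zero_of_notMem_exponents (support_rep_X1_subset hF) h,
    eq_zero_of_notMem_exponents (support_rep_X2_subset hF) h, mul_zero, mul_zero, smul_zero,
    add_zero]

theorem isLeading_rep_X1_add_X2 (hF : IsLeading F k n) :
    IsLeading (D.rep hq ht (X1 q t + X2 q t) F) (k + 1) n where
  support_subset := by
    rw [map_add]
    exact (Function.support_add _ _).trans (Set.union_subset
      (support_rep_X1_subset hF.support_subset) (support_rep_X2_subset hF.support_subset))
  ne_zero := by
    rw [Nat.cast_succ, rep_X1_add_X2_apply_top hF.support_subset]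
    simpa [D.β_ne_zero ht] using hF.ne_zero

theorem isLeading_rep_X1_mul_X2 :
    IsLeading (D.rep hq ht (q ^ 2 • (X1 q t * X2 q t)) F) k (n + 1) ↔ IsLeading F k n := by
  have h_apply (i j : ℤ) : D.rep hq ht (q ^ 2 • (X1 q t * X2 q t)) F (i + 1, j + 1) = 0 ↔
      F (i, j) = 0 := by
    rw [map_smul, LinearMap.smul_apply, Pi.smul_apply, rep_X1_mul_X2_apply, add_sub_cancel_right,
      add_sub_cancel_right, smul_eq_zero_iff_right (pow_ne_zero 2 hq), map_eq_zero, map_eq_zero]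
  refine ⟨fun h ↦ ⟨fun ⟨i, j⟩ hp ↦ ?_, ?_⟩, fun h ↦ ⟨fun ⟨i, j⟩ hp ↦ ?_, ?_⟩⟩
  · have := mem_exponents.1 (h.support_subset ((h_apply i j).not.2 hp))
    exact mem_exponents.2 (by omega)
  · exact (h_apply _ _).not.1 (by simpa only [add_assoc] using h.ne_zero)
  · obtain ⟨i, rfl⟩ : ∃ i', i = i' + 1 := ⟨i - 1, by ring⟩
    obtain ⟨j, rfl⟩ : ∃ j', j = j' + 1 := ⟨j - 1, by ring⟩
    have := mem_exponents.1 (h.support_subset ((h_apply i j).not.1 hp))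
    exact mem_exponents.2 (by omega)
  · rw [← add_assoc]
    exact (h_apply _ _).not.2 h.ne_zero

end CherednikDatum

end LeadingTerm

section Injectivity

namespace CherednikDatum

open DAHA AlgBt

variable {K : Type*} [Field K] [Algebra ℂ K] (D : CherednikDatum q K)
  (hq : q ≠ 0) (ht : t ≠ 0) (ht2 : t ^ 2 ≠ -1)

/-- The action of `ℬ_t` on the function `1`, through the Harish-Chandra homomorphism. -/
def hcVec : AlgBt q t →ₗ[ℂ] (ℤ × ℤ → K) :=
  LinearMap.applyₗ (Pi.single 0 1) ∘ₗ (D.rep hq ht).toLinearMap ∘ₗ hcMap hq ht ht2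

variable {D hq ht ht2} {F : ℤ × ℤ → K} {k : ℕ} {n : ℤ}

theorem hcVec_one : D.hcVec hq ht ht2 1 = Pi.single 0 1 :=
  (congrArg (fun a ↦ D.rep hq ht a (Pi.single 0 1)) hcMap_one).trans
    (D.rep_eSym_single hq ht ht2)

theorem hcVec_gB_mul (b : BGen) (x : AlgBt q t) :
    D.hcVec hq ht ht2 (RingQuot.mkAlgHom ℂ (BRel q t) (gB b) * x) =
      D.rep hq ht (hcGen q t b) (D.hcVec hq ht ht2 x) := by
  have h : hcMap hq ht ht2 (RingQuot.mkAlgHom ℂ (BRel q t) (gB b) * x) =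
      hcGen q t b * hcMap hq ht ht2 x := by
    rw [hcMap_mul, hcMap_gB, mul_assoc, ← hcMap_one (hq := hq) (ht := ht) (ht2 := ht2),
      ← hcMap_mul, one_mul]
  refine (congrArg (fun a ↦ D.rep hq ht a (Pi.single 0 1)) h).trans ?_
  rw [map_mul]
  rfl

theorem hcVec_c1_mul (x : AlgBt q t) :
    D.hcVec hq ht ht2 (c1 q t * x) = (D.y₁ + D.y₂) • D.hcVec hq ht ht2 x := by
  rw [c1, hcVec_gB_mul, hcGen, map_add, rep_Y1, rep_Y2, add_smul]
  rfl

theorem hcVec_c2_mul (x : AlgBt q t) :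
    D.hcVec hq ht ht2 (c2 q t * x) = (q ^ 2 • (D.y₁ * D.y₂)) • D.hcVec hq ht ht2 x := by
  rw [c2, hcVec_gB_mul, hcGen, map_smul, map_mul, rep_Y1, rep_Y2, smul_assoc, mul_smul]
  rfl

theorem hcVec_d1_mul (x : AlgBt q t) : D.hcVec hq ht ht2 (d1 q t * x) =
    D.rep hq ht (X1 q t + X2 q t) (D.hcVec hq ht ht2 x) :=
  hcVec_gB_mul .d1 x

theorem hcVec_d2_mul (x : AlgBt q t) : D.hcVec hq ht ht2 (d2 q t * x) =
    D.rep hq ht (q ^ 2 • (X1 q t * X2 q t)) (D.hcVec hq ht ht2 x) :=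
  hcVec_gB_mul .d2 x

theorem hcVec_rr_mul (x : AlgBt q t) : D.hcVec hq ht ht2 (rr q t * x) =
    D.rep hq ht (rLift q t) (D.hcVec hq ht ht2 x) :=
  hcVec_gB_mul .r x

theorem hcVec_c1_pow_mul (m : ℕ) (x : AlgBt q t) :
    D.hcVec hq ht ht2 (c1 q t ^ m * x) = (D.y₁ + D.y₂) ^ m • D.hcVec hq ht ht2 x := by
  induction m with
  | zero => rw [pow_zero, pow_zero, one_mul, one_smul]
  | succ m ih => rw [pow_succ', pow_succ', mul_assoc, hcVec_c1_mul, ih, mul_smul]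

theorem hcVec_unitC_zpow_mul (m : ℤ) (x : AlgBt q t) :
    D.hcVec hq ht ht2 (↑(unitC q t ^ m) * x) =
      (q ^ 2 • (D.y₁ * D.y₂)) ^ m • D.hcVec hq ht ht2 x := by
  have h_ne : q ^ 2 • (D.y₁ * D.y₂) ≠ 0 :=
    smul_ne_zero (pow_ne_zero 2 hq) (mul_ne_zero D.y₁_ne_zero D.y₂_ne_zero)
  have h_succ (m : ℤ) : D.hcVec hq ht ht2 (↑(unitC q t ^ (m + 1)) * x) =
      (q ^ 2 • (D.y₁ * D.y₂)) • D.hcVec hq ht ht2 (↑(unitC q t ^ m) * x) := by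
    rw [add_comm, zpow_one_add, Units.val_mul, mul_assoc, ← hcVec_c2_mul]
    rfl
  induction m with
  | zero => rw [zpow_zero, zpow_zero, Units.val_one, one_mul, one_smul]
  | succ m ih => rw [h_succ, ih, smul_smul, ← zpow_one_add₀ h_ne, add_comm]
  | pred m ih =>
    refine smul_right_injective _ h_ne ?_
    dsimp only
    rw [← h_succ, sub_add_cancel, ih, smul_smul, ← zpow_one_add₀ h_ne, add_sub_cancel]

theorem isLeading_hcVec_unitD_zpow (n : ℤ) :
    IsLeading (D.hcVec hq ht ht2 ↑(unitD q t ^ n)) 0 n := by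
  have h_succ (n : ℤ) : IsLeading (D.hcVec hq ht ht2 ↑(unitD q t ^ (n + 1))) 0 (n + 1) ↔
      IsLeading (D.hcVec hq ht ht2 ↑(unitD q t ^ n)) 0 n := by
    have h : (↑(unitD q t ^ (n + 1)) : AlgBt q t) = d2 q t * ↑(unitD q t ^ n) := by
      rw [add_comm, zpow_one_add]
      rfl
    rw [h, hcVec_d2_mul, isLeading_rep_X1_mul_X2]
  induction n with
  | zero =>
    rw [zpow_zero, Units.val_one, hcVec_one]
    exact isLeading_single
  | succ n ih => exact (h_succ n).2 ih
  | pred n ih => exact (h_succ _).1 (by rwa [sub_add_cancel])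

theorem isLeading_hcVec_d1_pow_mul (k : ℕ) (n : ℤ) :
    IsLeading (D.hcVec hq ht ht2 (d1 q t ^ k * ↑(unitD q t ^ n))) k n := by
  induction k with
  | zero => rw [pow_zero, one_mul]; exact isLeading_hcVec_unitD_zpow n
  | succ k ih => rw [pow_succ', mul_assoc, hcVec_d1_mul]; exact isLeading_rep_X1_add_X2 ih

/-- The subfield of `s`-invariants, as a subalgebra. -/
def invariants (D : CherednikDatum q K) : Subalgebra ℂ K :=
  AlgHom.equalizer D.s.toAlgHom (AlgHom.id ℂ K)

theorem mem_invariants {x : K} : x ∈ D.invariants ↔ D.s x = x :=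
  Iff.rfl

theorem linearIndependent_one_y₁ : LinearIndependent D.invariants ![1, D.y₁] := by
  refine LinearIndependent.pair_iff.2 fun a b h ↦ ?_
  have h_s := congrArg D.s h
  simp only [Subalgebra.smul_def, smul_eq_mul, mul_one, map_add, map_mul, map_zero, D.s_y₁,
    mem_invariants.1 a.2, mem_invariants.1 b.2] at h h_s
  have h_b : (b : K) = 0 := by
    refine (mul_eq_zero.1 (?_ : (b : K) * (D.y₁ - D.y₂) = 0)).resolve_right D.y₁_sub_y₂_ne_zero
    linear_combination h - h_s
  rw [h_b, zero_mul, add_zero] at h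
  exact ⟨Subtype.ext h, Subtype.ext h_b⟩

theorem support_hcVec_subset (ε : Fin 2) (k : ℕ) (n : ℤ) :
    (D.hcVec hq ht ht2 (![1, rr q t] ε * (d1 q t ^ k * ↑(unitD q t ^ n)))).support ⊆
      exponents (k + ε) n := by
  have h := isLeading_hcVec_d1_pow_mul (D := D) (hq := hq) (ht := ht) (ht2 := ht2) k n
  fin_cases ε
  · simpa using h.support_subset
  · simpa [hcVec_rr_mul] using support_rep_rLift_subset h.support_subset

theorem hcVec_apply_top {ε : Fin 2} {k m : ℕ} (h : k + ε = m) (n : ℤ) :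
    D.hcVec hq ht ht2 (![1, rr q t] ε * (d1 q t ^ k * ↑(unitD q t ^ n))) (m + n, n) =
      ![1, D.y₁] ε * D.hcVec hq ht ht2 (d1 q t ^ m * ↑(unitD q t ^ n)) (m + n, n) := by
  have h_lead := isLeading_hcVec_d1_pow_mul (D := D) (hq := hq) (ht := ht) (ht2 := ht2) k n
  subst h
  fin_cases ε
  · simp
  · simpa [hcVec_rr_mul, pow_succ', mul_assoc, hcVec_d1_mul] using
      rep_rLift_apply_top h_lead.support_subset

theorem linearIndependent_hcVec : LinearIndependent D.invariants fun i : Fin 2 × ℕ × ℤ ↦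
    D.hcVec hq ht ht2 (![1, rr q t] i.1 * (d1 q t ^ i.2.1 * ↑(unitD q t ^ i.2.2))) := by
  let deg (i : Fin 2 × ℕ × ℤ) : ℕ := i.2.1 + i.1
  refine linearIndependent_of_leading deg (fun i ↦ (deg i + i.2.2, i.2.2))
    (fun i j h_deg h_ne ↦ ?_) fun i ↦ ?_
  · have := mem_exponents.1 (support_hcVec_subset _ _ _ h_ne)
    rw [Prod.mk.injEq]
    simp only [deg] at *
    omega
  · have h_deg (j : {j | ((deg j + j.2.2, j.2.2) : ℤ × ℤ) = (deg i + i.2.2, i.2.2)}) :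
        deg j = deg i ∧ j.1.2.2 = i.2.2 := by
      have := Prod.mk.inj j.2
      omega
    have h_inj : Function.Injective fun j : {j | ((deg j + j.2.2, j.2.2) : ℤ × ℤ) =
        (deg i + i.2.2, i.2.2)} ↦ j.1.1 := fun j l hjl ↦ by
      have hj := h_deg j
      have hl := h_deg l
      have : j.1.1 = l.1.1 := hjl
      refine Subtype.ext (Prod.ext this (Prod.ext ?_ (hj.2.trans hl.2.symm)))
      simp only [deg, this] at hj hl
      omega
    let c := D.hcVec hq ht ht2 (d1 q t ^ deg i * ↑(unitD q t ^ i.2.2)) (deg i + i.2.2, i.2.2)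
    have hc : c ≠ 0 := (isLeading_hcVec_d1_pow_mul _ _).ne_zero
    have h_ker : LinearMap.ker (LinearMap.mulRight D.invariants c) = ⊥ :=
      LinearMap.ker_eq_bot.2 (mul_left_injective₀ hc)
    rw [LinearIndepOn]
    convert ((linearIndependent_one_y₁ (D := D)).comp _ h_inj).map' _ h_ker using 2 with j
    rw [(h_deg j).2]
    exact hcVec_apply_top (h_deg j).1 i.2.2

theorem linearIndependent_symmetric (hq : q ≠ 0) : LinearIndependent ℂ fun i : ℕ × ℤ ↦
    (D.y₁ + D.y₂) ^ i.1 * (q ^ 2 • (D.y₁ * D.y₂)) ^ i.2 := by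
  have h_eq (i : ℕ × ℤ) : (D.y₁ + D.y₂) ^ i.1 * (q ^ 2 • (D.y₁ * D.y₂)) ^ i.2 =
      (Units.mk0 (q ^ 2) (pow_ne_zero 2 hq) ^ i.2) •
        ((D.y₁ + D.y₂) ^ i.1 * (D.y₁ * D.y₂) ^ i.2) := by
    rw [Algebra.smul_def, mul_zpow, ← map_zpow₀, ← Algebra.smul_def, mul_smul_comm, Units.smul_def,
      Units.val_zpow_eq_zpow_val, Units.val_mk0]
  simp only [h_eq]
  exact (linearIndependent_pow_mul_zpow
    (algebraicIndependent_add_mul D.algebraicIndependent)).units_smul _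

theorem hcVec_injective : Function.Injective (D.hcVec hq ht ht2) := by
  let b (i : ℕ × ℤ) : D.invariants := ⟨(D.y₁ + D.y₂) ^ i.1 * (q ^ 2 • (D.y₁ * D.y₂)) ^ i.2, by
    rw [mem_invariants, map_mul, map_pow, map_zpow₀, map_smul, map_add, map_mul, D.s_y₁, D.s_y₂,
      add_comm, mul_comm D.y₂]⟩
  have hb : LinearIndependent ℂ b :=
    LinearIndependent.of_comp D.invariants.val.toLinearMap (linearIndependent_symmetric hq)
  have h_eq : D.hcVec hq ht ht2 ∘ monomial q t = fun i ↦ b i.1 •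
      D.hcVec hq ht ht2 (![1, rr q t] i.2.1 * (d1 q t ^ i.2.2.1 * ↑(unitD q t ^ i.2.2.2))) := by
    funext i
    rw [Function.comp_apply, monomial, mul_assoc, mul_assoc, hcVec_c1_pow_mul, hcVec_unitC_zpow_mul,
      smul_smul]
    rfl
  have h_disjoint := Submodule.range_ker_disjoint
    (h_eq ▸ linearIndependent_smul hb linearIndependent_hcVec)
  rwa [span_range_monomial hq, top_disjoint, LinearMap.ker_eq_bot] at h_disjoint

end CherednikDatum

end Injectivity

section RationalFunctions

open MvPolynomial

/-- The automorphism `X₀ ↦ X₁`, `X₁ ↦ X₀` of the polynomial ring. -/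
def swapVars : MvPolynomial (Fin 2) ℂ ≃ₐ[ℂ] MvPolynomial (Fin 2) ℂ :=
  renameEquiv ℂ (Equiv.swap 0 1)

/-- The automorphism `X₀ ↦ q⁻² X₁`, `X₁ ↦ X₀` of the polynomial ring. -/
def qRotate (hq : q ≠ 0) : MvPolynomial (Fin 2) ℂ ≃ₐ[ℂ] MvPolynomial (Fin 2) ℂ :=
  AlgEquiv.ofAlgHom (aeval ![q⁻¹ ^ 2 • X 1, X 0]) (aeval ![X 1, q ^ 2 • X 0])
    (by ext i; fin_cases i <;> simp [hq]) (by ext i; fin_cases i <;> simp [hq])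

theorem swapVars_X_zero : swapVars (X 0) = X 1 := by
  simp [swapVars]

theorem swapVars_X_one : swapVars (X 1) = X 0 := by
  simp [swapVars]

theorem qRotate_X_zero (hq : q ≠ 0) : qRotate hq (X 0) = q⁻¹ ^ 2 • X 1 := by
  simp [qRotate]

theorem qRotate_X_one (hq : q ≠ 0) : qRotate hq (X 1) = X 0 := by
  simp [qRotate]

theorem swapVars_mul_self : swapVars * swapVars = 1 := by
  apply AlgEquiv.coe_toAlgHom_injective
  ext i
  fin_cases i <;> simp [swapVars_X_zero, swapVars_X_one]

theorem swapVars_mul_qRotate_mul_qRotate (hq : q ≠ 0) :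
    swapVars * (qRotate hq * qRotate hq) = qRotate hq * qRotate hq * swapVars := by
  apply AlgEquiv.coe_toAlgHom_injective
  ext i
  fin_cases i <;> simp [swapVars_X_zero, swapVars_X_one, qRotate_X_zero, qRotate_X_one]

/-- The tautological datum on the field of rational functions in `y₁`, `y₂`. -/
def rationalDatum (hq : q ≠ 0) : CherednikDatum q (FractionRing (MvPolynomial (Fin 2) ℂ)) :=
  let K := FractionRing (MvPolynomial (Fin 2) ℂ)
  let lift := IsFractionRing.fieldEquivOfAlgEquivHom (A := ℂ) (B := MvPolynomial (Fin 2) ℂ) ℂ K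
  have lift_algebraMap φ x : lift φ (algebraMap _ K x) = algebraMap _ K (φ x) :=
    IsFractionRing.fieldEquivOfAlgEquiv_algebraMap ℂ K K φ x
  { s := lift swapVars
    w := lift (qRotate hq)
    y₁ := algebraMap (MvPolynomial (Fin 2) ℂ) K (X 0)
    y₂ := algebraMap (MvPolynomial (Fin 2) ℂ) K (X 1)
    s_s := fun x ↦ by
      rw [← AlgEquiv.mul_apply, ← map_mul, swapVars_mul_self, map_one, AlgEquiv.one_apply]
    s_w_w := fun x ↦ by
      have h := congrArg lift (swapVars_mul_qRotate_mul_qRotate hq)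
      simp only [map_mul] at h
      exact DFunLike.congr_fun h x
    s_y₁ := by rw [lift_algebraMap, swapVars_X_zero]
    w_y₁ := by
      rw [lift_algebraMap, qRotate_X_zero]
      exact map_smul (IsScalarTower.toAlgHom ℂ (MvPolynomial (Fin 2) ℂ) K) _ _
    w_y₂ := by rw [lift_algebraMap, qRotate_X_one]
    algebraicIndependent := by
      have h_eq : ![algebraMap (MvPolynomial (Fin 2) ℂ) K (X 0),
          algebraMap (MvPolynomial (Fin 2) ℂ) K (X 1)] =
            IsScalarTower.toAlgHom ℂ (MvPolynomial (Fin 2) ℂ) K ∘ X := by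
        ext i
        fin_cases i <;> rfl
      exact h_eq ▸ (algebraicIndependent_X (Fin 2) ℂ).map' (IsFractionRing.injective _ K) }

end RationalFunctions

namespace DAHA

theorem hcMap_injective (hq : q ≠ 0) (ht : t ≠ 0) (ht2 : t ^ 2 ≠ -1) :
    Function.Injective (hcMap hq ht ht2) :=
  .of_comp (f := fun a ↦ (rationalDatum hq).rep hq ht a (Pi.single 0 1))
    (rationalDatum hq).hcVec_injective

theorem range_hcMap (hq : q ≠ 0) (ht : t ≠ 0) (ht2 : t ^ 2 ≠ -1) :
    Set.range (hcMap hq ht ht2) = {x | ∃ y, x = 𝐞 * y * 𝐞} := by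
  ext x
  constructor
  · rintro ⟨z, rfl⟩
    refine ⟨hcMap hq ht ht2 z, ?_⟩
    rw [← hcMap_one (hq := hq) (ht := ht) (ht2 := ht2), ← hcMap_mul, ← hcMap_mul, one_mul, mul_one]
  · rintro ⟨y, rfl⟩
    exact eSym_mul_mem_hcRange y

end DAHA

/-- There is a unique ℂ-algebra isomorphism `HC` from `ℬ_t` onto the
spherical double affine Hecke algebra `eH_{t,q}e`, determined by
`HC(c₁) = e(Y₁+Y₂)e`, `HC(c₂) = q²·e(Y₁Y₂)e`, `HC(d₁) = e(X₁+X₂)e`,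
`HC(d₂) = q²·e(X₁X₂)e`, `HC(r) = e(t⁻²Y₁X₁ + Y₂X₂)e`.  (Since the unit of
`eH_{t,q}e` is `e` rather than the unit of `H_{t,q}`, the map is formalized as a
multiplicative ℂ-linear map with `HC(1) = e`, injective, and with image exactly
`eH_{t,q}e = {e·y·e : y ∈ H_{t,q}}`.) -/
theorem stmt19 (q t : ℂ) (hq : q ≠ 0) (ht : t ≠ 0) (ht2 : t ^ 2 ≠ -1) :
    ∃! Φ : AlgBt q t →ₗ[ℂ] DAHA q t,
      (∀ x y : AlgBt q t, Φ (x * y) = Φ x * Φ y) ∧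
      Φ 1 = eSym q t ∧
      Function.Injective Φ ∧
      Set.range Φ = {x : DAHA q t | ∃ y : DAHA q t, x = eSym q t * y * eSym q t} ∧
      Φ (c1 q t) = eSym q t * (Y1 q t + Y2 q t) * eSym q t ∧
      Φ (c2 q t) = (q ^ 2) • (eSym q t * (Y1 q t * Y2 q t) * eSym q t) ∧
      Φ (d1 q t) = eSym q t * (X1 q t + X2 q t) * eSym q t ∧
      Φ (d2 q t) = (q ^ 2) • (eSym q t * (X1 q t * X2 q t) * eSym q t) ∧
      Φ (rr q t)
        = eSym q t * ((t⁻¹ ^ 2) • (Y1 q t * X1 q t) + Y2 q t * X2 q t) * eSym q t := by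
  have h_c1 := DAHA.hcMap_gB_eq_eSym_mul (hq := hq) (ht := ht) (ht2 := ht2) .c1
  have h_d1 := DAHA.hcMap_gB_eq_eSym_mul (hq := hq) (ht := ht) (ht2 := ht2) .d1
  refine ⟨DAHA.hcMap hq ht ht2, ⟨DAHA.hcMap_mul, DAHA.hcMap_one, DAHA.hcMap_injective hq ht ht2,
    DAHA.range_hcMap hq ht ht2, h_c1, DAHA.hcMap_c2, h_d1, DAHA.hcMap_d2, DAHA.hcMap_rr⟩, ?_⟩
  rintro Ψ ⟨hΨ_mul, hΨ_one, -, -, hΨ_c1, hΨ_c2, hΨ_d1, hΨ_d2, hΨ_rr⟩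
  exact AlgBt.linearMap_ext_of_map_mul hΨ_mul DAHA.hcMap_mul (hΨ_one.trans DAHA.hcMap_one.symm)
    (hΨ_c1.trans h_c1.symm) (hΨ_c2.trans DAHA.hcMap_c2.symm) (hΨ_d1.trans h_d1.symm)
    (hΨ_d2.trans DAHA.hcMap_d2.symm) (hΨ_rr.trans DAHA.hcMap_rr.symm)
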